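/- arXiv:2304.13332 — 4 statements merged into one kernel-verified Lean document; each statement's English description precedes it below -/
import Mathlib

section
/- There exists an absolute constant C > 0 such that for every measure space with measure μ, every p ∈ [1,∞], every compact set K in X = L_p(μ), every γ ∈ (0,1], and every sequence produced by the weak greedy algorithm with parameter γ, the error satisfies σ_n(K) ≤ C γ^{−1} n^{1/2 + |1/2 − 1/p|} · ε_n(co(K)) for all n ≥ 1. -/
open scoped RealInnerProductSpace ENNReal

/-- Dyadic entropy number: infimum of all `ε > 0` such that `K` is covered by `2^n`
balls of radius `ε`. -/
noncomputable def entropyNumber {X : Type*} [NormedAddCommGroup X] (n : ℕ) (K : Set X) : ℝ :=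
  sInf {ε : ℝ | 0 < ε ∧ ∃ c : Fin (2 ^ n) → X, K ⊆ ⋃ i, Metric.closedBall (c i) ε}

/-- Symmetric (absolutely) convex hull: closure of the set of finite sums `∑ cᵢ gᵢ`
with `gᵢ ∈ K` and `∑ |cᵢ| ≤ 1`. -/
noncomputable def symConvexHull {X : Type*} [NormedAddCommGroup X] [NormedSpace ℝ X]
    (K : Set X) : Set X :=
  closure {x : X | ∃ (m : ℕ) (c : Fin m → ℝ) (g : Fin m → X),
    (∀ i, g i ∈ K) ∧ (∑ i, |c i|) ≤ 1 ∧ x = ∑ i, c i • g i}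

/-- Volume of the unit Euclidean ball in `ℝⁿ`. -/
noncomputable def unitBallVol (n : ℕ) : ℝ :=
  Real.pi ^ ((n : ℝ) / 2) / Real.Gamma ((n : ℝ) / 2 + 1)

/-- Span of the first `n` terms of a sequence. -/
noncomputable def spanFirst {X : Type*} [NormedAddCommGroup X] [NormedSpace ℝ X]
    (f : ℕ → X) (n : ℕ) : Submodule ℝ X :=
  Submodule.span ℝ (f '' {i | i < n})

/-- The weak greedy algorithm with parameter `γ`: `f n` (the `(n+1)`-st iterate) lies in `K`
and its distance to the span of the previous iterates is at least `γ` times that of any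
other element of `K`. -/
def IsWeakGreedy {X : Type*} [NormedAddCommGroup X] [NormedSpace ℝ X]
    (γ : ℝ) (K : Set X) (f : ℕ → X) : Prop :=
  ∀ n : ℕ, f n ∈ K ∧ ∀ g ∈ K,
    γ * Metric.infDist g (spanFirst f n : Set X) ≤ Metric.infDist (f n) (spanFirst f n : Set X)

/-- The greedy error `σ_n(K) = sup_{f ∈ K} dist(f, span{f_1,…,f_n})`. -/
noncomputable def greedyError {X : Type*} [NormedAddCommGroup X] [NormedSpace ℝ X]
    (K : Set X) (f : ℕ → X) (n : ℕ) : ℝ :=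
  sSup ((fun g => Metric.infDist g (spanFirst f n : Set X)) '' K)

/-- Kolmogorov `n`-width. -/
noncomputable def kolmogorovWidth {X : Type*} [NormedAddCommGroup X] [NormedSpace ℝ X]
    (n : ℕ) (K : Set X) : ℝ :=
  sInf {d : ℝ | ∃ Y : Submodule ℝ X, FiniteDimensional ℝ Y ∧ Module.finrank ℝ Y ≤ n ∧
    d = sSup ((fun g => Metric.infDist g (Y : Set X)) '' K)}

/-- `f` admits an `ℓ¹` representation over the dictionary `D`. -/
def HasL1Rep {X : Type*} [NormedAddCommGroup X] [NormedSpace ℝ X] (D : Set X) (f : X) : Prop :=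
  ∃ (c : ℕ → ℝ) (g : ℕ → X), (∀ i, g i ∈ D) ∧ Summable (fun i => |c i|) ∧
    HasSum (fun i => c i • g i) f

/-- The variation norm `‖f‖_{L₁(D)}`. -/
noncomputable def varNorm {X : Type*} [NormedAddCommGroup X] [NormedSpace ℝ X]
    (D : Set X) (f : X) : ℝ :=
  sInf {t : ℝ | ∃ (c : ℕ → ℝ) (g : ℕ → X), (∀ i, g i ∈ D) ∧ Summable (fun i => |c i|) ∧
    HasSum (fun i => c i • g i) f ∧ t = ∑' i, |c i|}

/-- The orthogonal greedy algorithm with target `f`: `fa 0 = 0`; at each step `g n ∈ D`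
maximizes `|⟨g, f - fa n⟩|` over `D`, and `fa (n+1)` is the orthogonal projection of `f`
onto `span{g 0, …, g n}`. -/
def IsOGA {X : Type*} [NormedAddCommGroup X] [InnerProductSpace ℝ X]
    (D : Set X) (f : X) (g fa : ℕ → X) : Prop :=
  fa 0 = 0 ∧ ∀ n : ℕ,
    g n ∈ D ∧ (∀ h ∈ D, |⟪h, f - fa n⟫| ≤ |⟪g n, f - fa n⟫|) ∧
    fa (n + 1) ∈ Submodule.span ℝ (g '' {i | i ≤ n}) ∧
    ∀ w ∈ Submodule.span ℝ (g '' {i | i ≤ n}), ⟪f - fa (n + 1), w⟫ = 0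

/-- Best `n`-term approximation error `E_n(f, D)`. -/
noncomputable def bestNTermError {X : Type*} [NormedAddCommGroup X] [NormedSpace ℝ X]
    (D : Set X) (n : ℕ) (f : X) : ℝ :=
  sInf {r : ℝ | ∃ (c : Fin n → ℝ) (g : Fin n → X), (∀ i, g i ∈ D) ∧ r = ‖f - ∑ i, c i • g i‖}

/-- The K-functional `K(t, g)` between `X` and `L₁(D)`. -/
noncomputable def Kfunctional {X : Type*} [NormedAddCommGroup X] [NormedSpace ℝ X]
    (D : Set X) (t : ℝ) (gg : X) : ℝ :=
  sInf {s : ℝ | ∃ h : X, HasL1Rep D h ∧ s = ‖gg - h‖ + t * varNorm D h}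

/-- The interpolation norm `‖g‖_θ = sup_{t > 0} t^{-θ} K(t, g)`. -/
noncomputable def interpNorm {X : Type*} [NormedAddCommGroup X] [NormedSpace ℝ X]
    (D : Set X) (θ : ℝ) (gg : X) : ℝ :=
  sSup ((fun t => t ^ (-θ) * Kfunctional D t gg) '' Set.Ioi (0 : ℝ))

section RademacherVolume

open MeasureTheory

/-- The sign `±1` encoded by a Boolean. -/
def boolSign (b : Bool) : ℝ := if b then 1 else -1

lemma boolSign_not (b : Bool) : boolSign (!b) = -boolSign b := by
  cases b <;> simp [boolSign]

lemma abs_boolSign (b : Bool) : |boolSign b| = 1 := by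
  cases b <;> simp [boolSign]

lemma boolSign_mul_self (b : Bool) : boolSign b * boolSign b = 1 := by
  cases b <;> simp [boolSign]

/-- Flipping one coordinate negates any sum over signs whose terms are odd in that coordinate. -/
lemma sum_boolSign_eq_zero_of_odd {n : ℕ} (k : Fin n) (F : (Fin n → Bool) → ℝ)
    (hF : ∀ s, F (Function.update s k (!s k)) = -F s) : ∑ s, F s = 0 := by
  have hinv : Function.Involutive
      (fun s : Fin n → Bool => Function.update s k (!s k)) := fun s => by
    simp
  have h := Equiv.sum_comp hinv.toPerm F
  simp only [Function.Involutive.coe_toPerm, hF, Finset.sum_neg_distrib] at h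
  linarith

lemma sum_boolSign_eq_zero {n : ℕ} (k : Fin n) :
    ∑ s : Fin n → Bool, boolSign (s k) = 0 :=
  sum_boolSign_eq_zero_of_odd k _ fun s => by simp [boolSign_not]

lemma sum_boolSign_mul_boolSign {n : ℕ} (j k : Fin n) :
    ∑ s : Fin n → Bool, boolSign (s j) * boolSign (s k) = if j = k then 2 ^ n else 0 := by
  split_ifs with h
  · subst h
    simp [boolSign_mul_self]
  · exact sum_boolSign_eq_zero_of_odd j _ fun s => by
      simp [boolSign_not, Function.update_of_ne (Ne.symm h)]

/-- Rademacher sums are an isometry of `ℓ²` into `L²`. -/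
lemma sum_sq_sum_boolSign {n : ℕ} (b : Fin n → ℝ) :
    ∑ s : Fin n → Bool, (∑ k, b k * boolSign (s k)) ^ 2 = 2 ^ n * ∑ k, b k ^ 2 := by
  calc ∑ s : Fin n → Bool, (∑ k, b k * boolSign (s k)) ^ 2
      = ∑ s : Fin n → Bool, ∑ j, ∑ k, b j * b k * (boolSign (s j) * boolSign (s k)) := by
        refine Finset.sum_congr rfl fun s _ => ?_
        rw [sq, Finset.sum_mul_sum]
        exact Finset.sum_congr rfl fun j _ => Finset.sum_congr rfl fun k _ => by ring
    _ = ∑ j, ∑ k, b j * b k * ∑ s : Fin n → Bool, boolSign (s j) * boolSign (s k) := by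
        rw [Finset.sum_comm]
        refine Finset.sum_congr rfl fun j _ => ?_
        rw [Finset.sum_comm]
        simp only [Finset.mul_sum]
    _ = 2 ^ n * ∑ k, b k ^ 2 := by
        simp only [sum_boolSign_mul_boolSign, Finset.mul_sum]
        refine Finset.sum_congr rfl fun j _ => ?_
        simp only [mul_ite, mul_zero, Finset.sum_ite_eq, Finset.mem_univ, if_true]
        ring

/-- The polytope cut out by prescribed bounds in the directions of all sign vectors. -/
def signPolytope {n : ℕ} (h : (Fin n → Bool) → ℝ) : Set (Fin n → ℝ) :=
  {y | ∀ s, ∑ k, boolSign (s k) * y k ≤ h s}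

/-- The average of a function over all sign vectors. -/
noncomputable def signMean {n : ℕ} (h : (Fin n → Bool) → ℝ) : ℝ := (∑ s, h s) / 2 ^ n

lemma measurableSet_signPolytope {n : ℕ} (h : (Fin n → Bool) → ℝ) :
    MeasurableSet (signPolytope h) := by
  have : signPolytope h = ⋂ s, {y : Fin n → ℝ | ∑ k, boolSign (s k) * y k ≤ h s} := by
    ext y
    simp [signPolytope]
  rw [this]
  exact MeasurableSet.iInter fun s => measurableSet_le (by fun_prop) measurable_const

lemma signMean_nonneg_of_mem_signPolytope {n : ℕ} {h : (Fin n → Bool) → ℝ} {y : Fin n → ℝ}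
    (hy : y ∈ signPolytope h) : 0 ≤ signMean h := by
  refine div_nonneg ?_ (by positivity)
  calc (0 : ℝ) = ∑ k, (∑ s : Fin n → Bool, boolSign (s k)) * y k := by
        simp [sum_boolSign_eq_zero]
    _ = ∑ s : Fin n → Bool, ∑ k, boolSign (s k) * y k := by
        rw [Finset.sum_comm]
        simp only [Finset.sum_mul]
    _ ≤ ∑ s, h s := Finset.sum_le_sum fun s _ => hy s

lemma sum_signs_succ {n : ℕ} (h : (Fin (n + 1) → Bool) → ℝ) :
    ∑ s, h s = ∑ s : Fin n → Bool, h (Fin.cons true s) +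
      ∑ s : Fin n → Bool, h (Fin.cons false s) := by
  rw [← Equiv.sum_comp (Fin.consEquiv fun _ => Bool) h, Fintype.sum_prod_type]
  simp [Fin.consEquiv]

lemma lintegral_min_pow_le (n : ℕ) (a b : ℝ) (hab : 0 ≤ a + b) :
    ∫⁻ t in Set.Icc (-b) a, ENNReal.ofReal ((min (a - t) (b + t)) ^ n)
      ≤ ENNReal.ofReal (2 * ((a + b) / 2) ^ (n + 1) / (n + 1)) := by
  set m := (a - b) / 2 with hm
  have h1 : ∫⁻ t in Set.Icc (-b) m, ENNReal.ofReal ((min (a - t) (b + t)) ^ n)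
      ≤ ENNReal.ofReal (((a + b) / 2) ^ (n + 1) / (n + 1)) := by
    calc _ ≤ ∫⁻ t in Set.Icc (-b) m, ENNReal.ofReal ((b + t) ^ n) := by
          refine setLIntegral_mono' measurableSet_Icc fun t ht => ENNReal.ofReal_le_ofReal ?_
          refine pow_le_pow_left₀ (le_min ?_ ?_) (min_le_right _ _) n <;> linarith [ht.1, ht.2]
      _ = ENNReal.ofReal (∫ t in Set.Icc (-b) m, (b + t) ^ n) := by
          refine (ofReal_integral_eq_lintegral_ofReal ?_ ?_).symm
          · exact (Continuous.continuousOn (by fun_prop)).integrableOn_Icc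
          · refine (ae_restrict_iff' measurableSet_Icc).2 (.of_forall fun t ht => ?_)
            exact pow_nonneg (by linarith [ht.1]) n
      _ = _ := by
          rw [integral_Icc_eq_integral_Ioc, ← intervalIntegral.integral_of_le (by linarith),
            intervalIntegral.integral_comp_add_left (fun t => t ^ n), integral_pow]
          congr 2
          rw [add_neg_cancel, zero_pow n.succ_ne_zero, sub_zero, hm]
          congr 1
          ring
  have h2 : ∫⁻ t in Set.Icc m a, ENNReal.ofReal ((min (a - t) (b + t)) ^ n)
      ≤ ENNReal.ofReal (((a + b) / 2) ^ (n + 1) / (n + 1)) := by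
    calc _ ≤ ∫⁻ t in Set.Icc m a, ENNReal.ofReal ((a - t) ^ n) := by
          refine setLIntegral_mono' measurableSet_Icc fun t ht => ENNReal.ofReal_le_ofReal ?_
          refine pow_le_pow_left₀ (le_min ?_ ?_) (min_le_left _ _) n <;> linarith [ht.1, ht.2]
      _ = ENNReal.ofReal (∫ t in Set.Icc m a, (a - t) ^ n) := by
          refine (ofReal_integral_eq_lintegral_ofReal ?_ ?_).symm
          · exact (Continuous.continuousOn (by fun_prop)).integrableOn_Icc
          · refine (ae_restrict_iff' measurableSet_Icc).2 (.of_forall fun t ht => ?_)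
            exact pow_nonneg (by linarith [ht.2]) n
      _ = _ := by
          rw [integral_Icc_eq_integral_Ioc, ← intervalIntegral.integral_of_le (by linarith),
            intervalIntegral.integral_comp_sub_left (fun t => t ^ n), integral_pow]
          congr 2
          rw [sub_self, zero_pow n.succ_ne_zero, sub_zero, hm]
          congr 1
          ring
  rw [← Set.Icc_union_Icc_eq_Icc (show -b ≤ m by linarith) (show m ≤ a by linarith)]
  refine (lintegral_union_le _ _ _).trans ((add_le_add h1 h2).trans ?_)
  rw [← ENNReal.ofReal_add (by positivity) (by positivity)]
  exact ENNReal.ofReal_le_ofReal (le_of_eq (by ring))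

/-- A Urysohn-type inequality for sign vectors; cross-polytopes are extremal. -/
theorem volume_signPolytope_le {n : ℕ} (h : (Fin n → Bool) → ℝ) (hh : 0 ≤ signMean h) :
    volume (signPolytope h) ≤ ENNReal.ofReal ((2 * signMean h) ^ n / n.factorial) := by
  induction n with
  | zero =>
    calc volume (signPolytope h) ≤ volume (Set.univ : Set (Fin 0 → ℝ)) :=
          measure_mono (Set.subset_univ _)
      _ ≤ _ := by simp [volume_pi]
  | succ n ih =>
    set a := signMean fun s : Fin n → Bool => h (Fin.cons true s) with ha
    set b := signMean fun s : Fin n → Bool => h (Fin.cons false s) with hb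
    have hmean : signMean h = (a + b) / 2 := by
      rw [ha, hb, signMean, signMean, signMean, sum_signs_succ, pow_succ]
      field_simp
    set g : ℝ → (Fin n → Bool) → ℝ := fun t s =>
      min (h (Fin.cons true s) - t) (h (Fin.cons false s) + t) with hg
    have hga (t : ℝ) : signMean (g t) ≤ min (a - t) (b + t) := by
      refine le_min ?_ ?_
      · calc signMean (g t) ≤ signMean fun s : Fin n → Bool => h (Fin.cons true s) - t :=
              div_le_div_of_nonneg_right
                (Finset.sum_le_sum fun s _ => min_le_left _ _) (by positivity)
          _ = a - t := by
              simp [ha, signMean, Finset.sum_sub_distrib, sub_div]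
      · calc signMean (g t) ≤ signMean fun s : Fin n → Bool => h (Fin.cons false s) + t :=
              div_le_div_of_nonneg_right
                (Finset.sum_le_sum fun s _ => min_le_right _ _) (by positivity)
          _ = b + t := by
              simp [hb, signMean, Finset.sum_add_distrib, add_div]
    have hslice (t : ℝ) : {y : Fin n → ℝ | (Fin.cons t y : Fin (n + 1) → ℝ) ∈ signPolytope h}
        = signPolytope (g t) := by
      ext y
      simp only [signPolytope, Set.mem_ofPred_eq, hg, le_min_iff]
      constructor
      · intro hy s
        have h1 := hy (Fin.cons true s)
        have h2 := hy (Fin.cons false s)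
        simp only [Fin.sum_univ_succ, Fin.cons_zero, Fin.cons_succ, boolSign] at h1 h2 ⊢
        simp at h1 h2 ⊢
        constructor <;> linarith
      · intro hy s
        obtain ⟨h1, h2⟩ := hy (Fin.tail s)
        rw [← Fin.cons_self_tail s]
        rw [Fin.sum_univ_succ]
        simp only [Fin.cons_zero, Fin.cons_succ]
        cases s 0 <;> simp [boolSign] at h1 h2 ⊢ <;> linarith
    have hbound (t : ℝ) : volume (signPolytope (g t)) ≤
        (Set.Icc (-b) a).indicator (fun t => ENNReal.ofReal (2 ^ n / n.factorial) *
          ENNReal.ofReal ((min (a - t) (b + t)) ^ n)) t := by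
      rcases (signPolytope (g t)).eq_empty_or_nonempty with he | ⟨y, hy⟩
      · simp [he]
      · have h0 := signMean_nonneg_of_mem_signPolytope hy
        have h1 := le_min_iff.1 (h0.trans (hga t))
        rw [Set.indicator_of_mem (by constructor <;> linarith [h1.1, h1.2]),
          ← ENNReal.ofReal_mul (by positivity)]
        refine (ih (g t) h0).trans (ENNReal.ofReal_le_ofReal ?_)
        rw [mul_pow, div_mul_eq_mul_div]
        gcongr
        exact hga t
    have e := (volume_preserving_piFinSuccAbove (fun _ : Fin (n + 1) => ℝ) 0).symm
    rw [← e.measure_preimage (measurableSet_signPolytope h).nullMeasurableSet,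
      Measure.volume_eq_prod,
      Measure.prod_apply (e.measurable (measurableSet_signPolytope h))]
    calc _ = ∫⁻ t, volume (signPolytope (g t)) := by
          refine lintegral_congr fun t => ?_
          rw [← hslice]
          congr 1
          ext y
          simp [MeasurableEquiv.piFinSuccAbove, Fin.consEquiv]
      _ ≤ _ := lintegral_mono hbound
      _ = ENNReal.ofReal (2 ^ n / n.factorial) *
          ∫⁻ t in Set.Icc (-b) a, ENNReal.ofReal ((min (a - t) (b + t)) ^ n) := by
          rw [lintegral_indicator measurableSet_Icc, lintegral_const_mul' _ _ (by simp)]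
      _ ≤ ENNReal.ofReal (2 ^ n / n.factorial) *
          ENNReal.ofReal (2 * ((a + b) / 2) ^ (n + 1) / (n + 1)) := by
          gcongr
          exact lintegral_min_pow_le n a b (by linarith)
      _ = _ := by
          rw [← ENNReal.ofReal_mul (by positivity), hmean]
          congr 1
          rw [Nat.factorial_succ, mul_pow]
          push_cast
          field_simp
          ring

/-- The first-order Walsh coefficient `E[ε_k x_ε]` of a family indexed by sign vectors. -/
noncomputable def walshCoeff {n : ℕ} {X : Type*} [AddCommGroup X] [Module ℝ X]
    (x : (Fin n → Bool) → X) (k : Fin n) : X :=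
  ((2 : ℝ) ^ n)⁻¹ • ∑ s, boolSign (s k) • x s

lemma sum_mul_walshCoeff {n : ℕ} (x : (Fin n → Bool) → ℝ) (b : Fin n → ℝ) :
    2 ^ n * ∑ k, b k * walshCoeff x k = ∑ s, x s * ∑ k, b k * boolSign (s k) := by
  simp only [walshCoeff, smul_eq_mul, Finset.mul_sum]
  rw [Finset.sum_comm]
  refine Finset.sum_congr rfl fun s _ => Finset.sum_congr rfl fun k _ => ?_
  field_simp

/-- Bessel's inequality for the Rademacher system. -/
lemma sum_sq_walshCoeff_le {n : ℕ} (x : (Fin n → Bool) → ℝ) :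
    ∑ k, walshCoeff x k ^ 2 ≤ ∑ s, ((2 : ℝ) ^ n)⁻¹ * x s ^ 2 := by
  have h0 : 0 ≤ ∑ s, (x s - ∑ k, walshCoeff x k * boolSign (s k)) ^ 2 := by positivity
  have h1 := sum_mul_walshCoeff x (walshCoeff x)
  have h2 := sum_sq_sum_boolSign (walshCoeff x)
  simp only [sub_sq, Finset.sum_add_distrib, Finset.sum_sub_distrib, mul_assoc,
    ← Finset.mul_sum] at h0
  rw [← h1, h2] at h0
  simp only [← sq] at h0
  rw [← Finset.mul_sum, inv_mul_eq_div, le_div_iff₀ (by positivity)]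
  linarith

lemma sum_rpow_walshCoeff_le_of_two_le {n : ℕ} (x : (Fin n → Bool) → ℝ) {p : ℝ} (hp : 2 ≤ p) :
    ∑ k, |walshCoeff x k| ^ p ≤ ∑ s, ((2 : ℝ) ^ n)⁻¹ * |x s| ^ p := by
  set S := ∑ k, walshCoeff x k ^ 2 with hS
  have hS0 : 0 ≤ S := by positivity
  have hsq (t : ℝ) : (t ^ 2) ^ (p / 2) = |t| ^ p := by
    rw [← sq_abs, ← Real.rpow_natCast, ← Real.rpow_mul (abs_nonneg _)]
    congr 1
    push_cast
    ring
  have hsplit (r : ℝ) (hr : 0 ≤ r) : r ^ (p / 2) = r * r ^ (p / 2 - 1) := by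
    rcases hr.eq_or_lt with rfl | hr
    · rw [Real.zero_rpow (by linarith), zero_mul]
    · rw [Real.rpow_sub_one hr.ne']
      field_simp
  calc ∑ k, |walshCoeff x k| ^ p = ∑ k, walshCoeff x k ^ 2 * (walshCoeff x k ^ 2) ^ (p / 2 - 1) :=
        Finset.sum_congr rfl fun k _ => by rw [← hsq, hsplit _ (sq_nonneg _)]
    _ ≤ ∑ k, walshCoeff x k ^ 2 * S ^ (p / 2 - 1) := by
        refine Finset.sum_le_sum fun k hk => mul_le_mul_of_nonneg_left ?_ (sq_nonneg _)
        refine Real.rpow_le_rpow (sq_nonneg _) ?_ (by linarith)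
        exact Finset.single_le_sum (f := fun k => walshCoeff x k ^ 2)
          (fun i _ => sq_nonneg _) hk
    _ = S ^ (p / 2) := by rw [← Finset.sum_mul, hsplit S hS0]
    _ ≤ (∑ s, ((2 : ℝ) ^ n)⁻¹ * x s ^ 2) ^ (p / 2) :=
        Real.rpow_le_rpow hS0 (sum_sq_walshCoeff_le x) (by linarith)
    _ ≤ ∑ s, ((2 : ℝ) ^ n)⁻¹ * (x s ^ 2) ^ (p / 2) :=
        Real.rpow_arith_mean_le_arith_mean_rpow _ _ _ (fun _ _ => by positivity) (by simp)
          (fun _ _ => sq_nonneg _) (by linarith)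
    _ = _ := by simp only [hsq]

/-- An elementary Khintchine-type inequality, interpolating between `q = 2` and `q = ∞`. -/
lemma sum_rpow_sum_boolSign_le {n : ℕ} (b : Fin n → ℝ) {q : ℝ} (hq : 2 ≤ q) :
    ∑ s : Fin n → Bool, |∑ k, b k * boolSign (s k)| ^ q
      ≤ 2 ^ n * ((n : ℝ) ^ (q - 2) * ∑ k, |b k| ^ q) := by
  set B := ∑ k, |b k| with hB
  set N := ∑ k, |b k| ^ q with hN
  have hB0 : 0 ≤ B := by positivity
  have hN0 : 0 ≤ N := by positivity
  have hq0 : 0 < q := by linarith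
  have hZ (s : Fin n → Bool) : |∑ k, b k * boolSign (s k)| ≤ B :=
    (Finset.abs_sum_le_sum_abs _ _).trans
      (le_of_eq (by simp [hB, abs_mul, abs_boolSign]))
  have hB' : B ^ q ≤ (n : ℝ) ^ (q - 1) * N := by
    simpa using Real.rpow_sum_le_const_mul_sum_rpow Finset.univ b (p := q) (by linarith)
  have hS' : (∑ k, b k ^ 2) ^ (q / 2) ≤ (n : ℝ) ^ (q / 2 - 1) * N := by
    have := Real.rpow_sum_le_const_mul_sum_rpow Finset.univ (fun k => b k ^ 2) (p := q / 2)
      (by linarith)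
    have hsq (t : ℝ) : |t ^ 2| ^ (q / 2) = |t| ^ q := by
      rw [abs_pow, ← Real.rpow_natCast, ← Real.rpow_mul (abs_nonneg _)]
      congr 1
      push_cast
      ring
    simp only [hsq] at this
    simpa using this
  have hn0 : (0 : ℝ) ≤ n := n.cast_nonneg
  rcases n.eq_zero_or_pos with rfl | hn
  · simp [Real.zero_rpow hq0.ne', hN]
  have hn1 : (0 : ℝ) < n := Nat.cast_pos.2 hn
  have hBq : B ^ (q - 2) ≤ ((n : ℝ) ^ (q - 1) * N) ^ ((q - 2) / q) := by
    calc B ^ (q - 2) = (B ^ q) ^ ((q - 2) / q) := by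
          rw [← Real.rpow_mul hB0]
          congr 1
          field_simp
      _ ≤ _ := Real.rpow_le_rpow (by positivity) hB' (div_nonneg (by linarith) hq0.le)
  have hSq : ∑ k, b k ^ 2 ≤ ((n : ℝ) ^ (q / 2 - 1) * N) ^ (2 / q) := by
    calc ∑ k, b k ^ 2 = ((∑ k, b k ^ 2) ^ (q / 2)) ^ (2 / q) := by
          rw [← Real.rpow_mul (by positivity)]
          have : q / 2 * (2 / q) = 1 := by field_simp
          rw [this, Real.rpow_one]
      _ ≤ _ := Real.rpow_le_rpow (by positivity) hS' (by positivity)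
  have hmul : ((n : ℝ) ^ (q - 1) * N) ^ ((q - 2) / q) * ((n : ℝ) ^ (q / 2 - 1) * N) ^ (2 / q)
      = (n : ℝ) ^ (q - 2) * N := by
    rw [Real.mul_rpow (by positivity) hN0, Real.mul_rpow (by positivity) hN0,
      ← Real.rpow_mul hn0, ← Real.rpow_mul hn0, mul_mul_mul_comm, ← Real.rpow_add hn1,
      ← Real.rpow_add_of_nonneg hN0 (div_nonneg (by linarith) hq0.le) (by positivity)]
    have h1 : (q - 2) / q + 2 / q = 1 := by field_simp; ring
    have h2 : (q - 1) * ((q - 2) / q) + (q / 2 - 1) * (2 / q) = q - 2 := by field_simp; ring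
    rw [h1, h2, Real.rpow_one]
  calc ∑ s : Fin n → Bool, |∑ k, b k * boolSign (s k)| ^ q
      ≤ ∑ s : Fin n → Bool, B ^ (q - 2) * (∑ k, b k * boolSign (s k)) ^ 2 := by
        refine Finset.sum_le_sum fun s _ => ?_
        set Z := ∑ k, b k * boolSign (s k)
        calc |Z| ^ q = |Z| ^ ((q - 2) + (2 : ℕ)) := by congr 1; push_cast; ring
          _ = |Z| ^ (q - 2) * |Z| ^ 2 := by
              rw [Real.rpow_add_of_nonneg (abs_nonneg _) (by linarith) (by positivity),
                Real.rpow_natCast]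
          _ ≤ B ^ (q - 2) * Z ^ 2 := by
              rw [sq_abs]
              exact mul_le_mul_of_nonneg_right
                (Real.rpow_le_rpow (abs_nonneg _) (hZ s) (by linarith)) (sq_nonneg _)
    _ = 2 ^ n * (B ^ (q - 2) * ∑ k, b k ^ 2) := by
        rw [← Finset.mul_sum, sum_sq_sum_boolSign]
        ring
    _ ≤ 2 ^ n * (((n : ℝ) ^ (q - 1) * N) ^ ((q - 2) / q) *
          ((n : ℝ) ^ (q / 2 - 1) * N) ^ (2 / q)) := by
        gcongr
    _ = _ := by rw [hmul]

lemma sum_rpow_walshCoeff_le_of_le_two {n : ℕ} (x : (Fin n → Bool) → ℝ) {p : ℝ} (hp1 : 1 < p)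
    (hp : p ≤ 2) :
    ∑ k, |walshCoeff x k| ^ p ≤ (n : ℝ) ^ (2 - p) * ∑ s, ((2 : ℝ) ^ n)⁻¹ * |x s| ^ p := by
  set y := walshCoeff x with hy
  set q := p.conjExponent with hq
  have hpq : p.HolderConjugate q := Real.HolderConjugate.conjExponent hp1
  have hq2 : 2 ≤ q := by
    rw [hq, Real.conjExponent, le_div_iff₀ (by linarith)]
    linarith
  have hp0 : 0 < p := hpq.pos
  have hq0 : 0 < q := hpq.symm.pos
  set T := ∑ k, |y k| ^ p with hT
  have hT0 : 0 ≤ T := by positivity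
  rcases hT0.eq_or_lt with hT1 | hTpos
  · rw [← hT1]
    positivity
  have hn0 : (0 : ℝ) ≤ n := n.cast_nonneg
  set b : Fin n → ℝ := fun k => SignType.sign (y k) * |y k| ^ (p - 1) with hb
  have hby (k : Fin n) : b k * y k = |y k| ^ p := by
    have h1 : (SignType.sign (y k) : ℝ) * y k = |y k| := sign_mul_self _
    calc b k * y k = (SignType.sign (y k) * y k) * |y k| ^ (p - 1) := by rw [hb]; ring
      _ = |y k| ^ p := by
        rcases (abs_nonneg (y k)).eq_or_lt with h | h
        · rw [h1, ← h, Real.zero_rpow hp0.ne', zero_mul]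
        · rw [h1, Real.rpow_sub_one h.ne']
          field_simp
  have hbq (k : Fin n) : |b k| ^ q = |y k| ^ p := by
    rcases eq_or_ne (y k) 0 with h | h
    · simp [hb, h, Real.zero_rpow hp0.ne', Real.zero_rpow hq0.ne']
    · have h1 : |(SignType.sign (y k) : ℝ)| = 1 := by
        rcases lt_or_gt_of_ne h with h | h <;> simp [h]
      rw [hb, abs_mul, h1, one_mul, abs_of_nonneg (Real.rpow_nonneg (abs_nonneg _) _),
        ← Real.rpow_mul (abs_nonneg _), hpq.sub_one_mul_conj]
  set E := ∑ s, ((2 : ℝ) ^ n)⁻¹ * |x s| ^ p with hE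
  have hE0 : 0 ≤ E := by positivity
  have hxE : ∑ s, |x s| ^ p = 2 ^ n * E := by
    rw [hE, ← Finset.mul_sum]
    field_simp
  have hZ := sum_rpow_sum_boolSign_le b hq2
  simp only [hbq] at hZ
  have hmain : 2 ^ n * T ≤ (2 ^ n * E) ^ (1 / p) * (2 ^ n * ((n : ℝ) ^ (q - 2) * T)) ^ (1 / q) := by
    calc 2 ^ n * T = ∑ s, x s * ∑ k, b k * boolSign (s k) := by
          rw [← sum_mul_walshCoeff, hT]
          simp only [← hy, hby]
      _ ≤ (∑ s, |x s| ^ p) ^ (1 / p) *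
            (∑ s : Fin n → Bool, |∑ k, b k * boolSign (s k)| ^ q) ^ (1 / q) :=
          Real.inner_le_Lp_mul_Lq _ _ _ hpq
      _ ≤ _ := by
          rw [hxE]
          gcongr
  have h2 : (0 : ℝ) < 2 ^ n := by positivity
  have hpq1 : 1 / p + 1 / q = 1 := by simpa using hpq.inv_add_inv_eq_one
  have hmain' : T ≤ E ^ (1 / p) * (((n : ℝ) ^ (q - 2)) ^ (1 / q) * T ^ (1 / q)) := by
    rw [Real.mul_rpow h2.le hE0, Real.mul_rpow h2.le (by positivity), mul_mul_mul_comm,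
      ← Real.rpow_add h2, hpq1, Real.rpow_one, Real.mul_rpow (by positivity) hT0] at hmain
    exact le_of_mul_le_mul_left hmain h2
  have hT2 : T ^ (1 / p) ≤ E ^ (1 / p) * ((n : ℝ) ^ (q - 2)) ^ (1 / q) := by
    refine le_of_mul_le_mul_right ?_ (Real.rpow_pos_of_pos hTpos (1 / q))
    rw [← Real.rpow_add hTpos, hpq1, Real.rpow_one]
    linarith
  calc T = (T ^ (1 / p)) ^ p := by
        rw [← Real.rpow_mul hT0, one_div_mul_cancel hp0.ne', Real.rpow_one]
    _ ≤ (E ^ (1 / p) * ((n : ℝ) ^ (q - 2)) ^ (1 / q)) ^ p :=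
        Real.rpow_le_rpow (by positivity) hT2 hp0.le
    _ = (n : ℝ) ^ (2 - p) * E := by
        rw [Real.mul_rpow (by positivity) (by positivity), ← Real.rpow_mul hE0,
          one_div_mul_cancel hp0.ne', Real.rpow_one, ← Real.rpow_mul hn0, ← Real.rpow_mul hn0,
          mul_comm]
        congr 2
        have : p - 1 ≠ 0 := by linarith
        rw [hq, Real.conjExponent]
        field_simp
        ring

/-- A functional of norm at most one annihilating `S` and realising the distance from `x` to `S`. -/
lemma exists_dual_apply_eq_infDist {X : Type*} [NormedAddCommGroup X] [NormedSpace ℝ X]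
    (S : Submodule ℝ X) (x : X) :
    ∃ l : StrongDual ℝ X, ‖l‖ ≤ 1 ∧ (∀ y ∈ S, l y = 0) ∧ l x = Metric.infDist x S := by
  obtain ⟨g, hg, hgx⟩ := exists_dual_vector'' ℝ (Submodule.Quotient.mk x : X ⧸ S)
  refine ⟨LinearMap.mkContinuous (g.toLinearMap ∘ₗ S.mkQ) 1 fun y => ?_,
    LinearMap.mkContinuous_norm_le _ zero_le_one _, fun y hy => ?_, ?_⟩
  · calc ‖g (Submodule.Quotient.mk y)‖ ≤ 1 * ‖(Submodule.Quotient.mk y : X ⧸ S)‖ :=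
          g.le_of_opNorm_le hg _
      _ ≤ 1 * ‖y‖ := by
          gcongr
          exact Submodule.Quotient.norm_mk_le S y
  · have : (Submodule.Quotient.mk y : X ⧸ S) = 0 := (Submodule.Quotient.mk_eq_zero S).2 hy
    exact (congrArg g this).trans (map_zero g)
  · calc g (Submodule.Quotient.mk x) = ‖(Submodule.Quotient.mk x : X ⧸ S)‖ := hgx
      _ = Metric.infDist x S := QuotientAddGroup.norm_mk (S := S.toAddSubgroup) x

/-- By duality, a bound on Walsh coefficients in `X` bounds Rademacher averages in the dual. -/
lemma signMean_norm_sum_boolSign_le {X : Type*} [NormedAddCommGroup X] [NormedSpace ℝ X] {n : ℕ}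
    {R : ℝ} (hR : ∀ x : (Fin n → Bool) → X, (∀ s, ‖x s‖ ≤ 1) → ∑ k, ‖walshCoeff x k‖ ≤ R)
    (l : Fin n → StrongDual ℝ X) (hl : ∀ k, ‖l k‖ ≤ 1) :
    signMean (fun s : Fin n → Bool => ‖∑ k, boolSign (s k) • l k‖) ≤ R := by
  refine le_of_forall_pos_le_add fun δ hδ => ?_
  have hx (s : Fin n → Bool) : ∃ x : X, ‖x‖ ≤ 1 ∧
      ‖∑ k, boolSign (s k) • l k‖ - δ ≤ (∑ k, boolSign (s k) • l k) x := by
    obtain ⟨x, hx, hlt⟩ := (∑ k, boolSign (s k) • l k).exists_lt_apply_of_lt_opNorm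
      (sub_lt_self _ hδ)
    rcases abs_choice ((∑ k, boolSign (s k) • l k) x) with h | h <;>
      rw [Real.norm_eq_abs, h] at hlt
    · exact ⟨x, hx.le, hlt.le⟩
    · exact ⟨-x, by simpa using hx.le, by rw [map_neg]; exact hlt.le⟩
  choose x hx1 hx2 using hx
  have hsum : ∑ s, (∑ k, boolSign (s k) • l k) (x s) = 2 ^ n * ∑ k, l k (walshCoeff x k) := by
    simp only [walshCoeff, map_smul, map_sum, smul_eq_mul, sum_apply, smul_apply]
    rw [← Finset.mul_sum, mul_inv_cancel_left₀ (by positivity), Finset.sum_comm]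
  have hle : ∑ k, l k (walshCoeff x k) ≤ R := by
    refine (Finset.sum_le_sum fun k _ => ?_).trans (hR x hx1)
    exact (le_abs_self _).trans (((l k).le_of_opNorm_le (hl k) _).trans_eq (one_mul _))
  rw [signMean, div_le_iff₀ (by positivity)]
  have h1 : ∑ s : Fin n → Bool, (‖∑ k, boolSign (s k) • l k‖ - δ) ≤ 2 ^ n * R := by
    refine (Finset.sum_le_sum fun s _ => hx2 s).trans ?_
    rw [hsum]
    gcongr
  rw [Finset.sum_sub_distrib] at h1
  simp at h1
  linarith

lemma sum_smul_mem_symConvexHull {X : Type*} [NormedAddCommGroup X] [NormedSpace ℝ X]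
    {K : Set X} {n : ℕ} {f : Fin n → X} (hf : ∀ k, f k ∈ K) {c : Fin n → ℝ}
    (hc : ∑ k, |c k| ≤ 1) : ∑ k, c k • f k ∈ symConvexHull K :=
  subset_closure ⟨n, c, f, hf, hc, rfl⟩

/-- Volume comparison: if the symmetric convex hull of `K` is covered by `2 ^ n` balls of radius
`ε`, then a triangular system in `K` cannot have too large a determinant. -/
lemma prod_apply_le_of_cover {X : Type*} [NormedAddCommGroup X] [NormedSpace ℝ X] {n : ℕ}
    {R : ℝ} (hR : ∀ x : (Fin n → Bool) → X, (∀ s, ‖x s‖ ≤ 1) → ∑ k, ‖walshCoeff x k‖ ≤ R)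
    {K : Set X} {ε : ℝ} (hε : 0 < ε) (c : Fin (2 ^ n) → X)
    (hc : symConvexHull K ⊆ ⋃ i, Metric.closedBall (c i) ε)
    (f : Fin n → X) (hf : ∀ k, f k ∈ K) (l : Fin n → StrongDual ℝ X) (hl : ∀ k, ‖l k‖ ≤ 1)
    (htri : ∀ j k, k < j → l j (f k) = 0) :
    ∏ k, l k (f k) ≤ (2 * R * ε) ^ n := by
  set h : (Fin n → Bool) → ℝ := fun s => ε * ‖∑ k, boolSign (s k) • l k‖ with hh
  have hmean : signMean h ≤ ε * R := by
    have := signMean_norm_sum_boolSign_le hR l hl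
    rw [signMean] at this
    rw [signMean, hh, ← Finset.mul_sum, mul_div_assoc]
    gcongr
  have hmean0 : 0 ≤ signMean h := div_nonneg (Finset.sum_nonneg fun s _ => by positivity)
    (by positivity)
  set T : X → Fin n → ℝ := fun x k => l k x with hT
  have hball (x : X) (hx : ‖x‖ ≤ ε) : T x ∈ signPolytope h := fun s => by
    calc ∑ k, boolSign (s k) * T x k = (∑ k, boolSign (s k) • l k) x := by
          simp [hT]
      _ ≤ ‖∑ k, boolSign (s k) • l k‖ * ‖x‖ :=
          (le_abs_self _).trans ((∑ k, boolSign (s k) • l k).le_opNorm x)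
      _ ≤ h s := by
          rw [mul_comm]
          exact mul_le_mul_of_nonneg_right hx (norm_nonneg _)
  set M : Matrix (Fin n) (Fin n) ℝ := Matrix.of fun j k => l j (f k) with hM
  have hMT (a : Fin n → ℝ) : M.toLin' a = T (∑ k, a k • f k) := by
    ext j
    simp [hM, hT, Matrix.mulVec, dotProduct, mul_comm]
  have hdet : LinearMap.det M.toLin' = ∏ k, l k (f k) := by
    rw [LinearMap.det_toLin', Matrix.det_of_isUpperTriangular]
    · simp [hM]
    · intro j k hjk
      exact htri j k hjk
  set B : Set (Fin n → ℝ) := {a | ∑ k, |a k| ^ (1 : ℝ) < 1} with hB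
  have hBvol : volume B = ENNReal.ofReal (2 ^ n / n.factorial) := by
    rw [hB, volume_sum_rpow_lt_one _ le_rfl]
    have : Real.Gamma (1 + 1) = 1 := by simpa using Real.Gamma_nat_eq_factorial 1
    simp [Real.Gamma_nat_eq_factorial, this]
  have hsub : M.toLin' '' B ⊆ ⋃ i, (fun y => -T (c i) + y) ⁻¹' signPolytope h := by
    rintro _ ⟨a, ha, rfl⟩
    have hmem : ∑ k, a k • f k ∈ symConvexHull K := by
      refine sum_smul_mem_symConvexHull hf ?_
      have ha' : ∑ k, |a k| ^ (1 : ℝ) < 1 := ha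
      simpa using ha'.le
    obtain ⟨i, hi⟩ := Set.mem_iUnion.1 (hc hmem)
    refine Set.mem_iUnion.2 ⟨i, ?_⟩
    rw [mem_closedBall_iff_norm] at hi
    have := hball _ hi
    have hsub' : T (∑ k, a k • f k - c i) = -T (c i) + T (∑ k, a k • f k) := by
      ext k
      simp only [hT, map_sub, Pi.add_apply, Pi.neg_apply]
      ring
    rw [hMT, Set.mem_preimage, ← hsub']
    exact this
  have hvol : ENNReal.ofReal |∏ k, l k (f k)| * ENNReal.ofReal (2 ^ n / n.factorial)
      ≤ ENNReal.ofReal (2 ^ n * ((2 * (ε * R)) ^ n / n.factorial)) := by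
    calc _ = volume (M.toLin' '' B) := by
          rw [Measure.addHaar_image_linearMap, hdet, hBvol]
      _ ≤ ∑ i, volume ((fun y => -T (c i) + y) ⁻¹' signPolytope h) :=
          (measure_mono hsub).trans (measure_iUnion_fintype_le _ _)
      _ = 2 ^ n * volume (signPolytope h) := by
          simp [measure_preimage_add]
      _ ≤ 2 ^ n * ENNReal.ofReal ((2 * (ε * R)) ^ n / n.factorial) := by
          gcongr
          refine (volume_signPolytope_le h hmean0).trans (ENNReal.ofReal_le_ofReal ?_)
          gcongr
      _ = _ := by
          rw [ENNReal.ofReal_mul (by positivity), ENNReal.ofReal_pow (by positivity)]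
          simp
  have hR0 : 0 ≤ ε * R := hmean0.trans hmean
  rw [← ENNReal.ofReal_mul (abs_nonneg _), ENNReal.ofReal_le_ofReal_iff (by positivity),
    mul_div_assoc', mul_div_assoc', div_le_div_iff_of_pos_right (by positivity), mul_comm] at hvol
  calc ∏ k, l k (f k) ≤ |∏ k, l k (f k)| := le_abs_self _
    _ ≤ (2 * (ε * R)) ^ n := le_of_mul_le_mul_left hvol (by positivity)
    _ = _ := by ring

lemma symConvexHull_subset_closedBall {X : Type*} [NormedAddCommGroup X] [NormedSpace ℝ X] {K : Set X}
    {r : ℝ} (hK : ∀ x ∈ K, ‖x‖ ≤ r) (hr : 0 ≤ r) :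
    symConvexHull K ⊆ Metric.closedBall 0 r := by
  refine closure_minimal ?_ Metric.isClosed_closedBall
  rintro _ ⟨m, c, g, hg, hc, rfl⟩
  rw [mem_closedBall_zero_iff]
  calc ‖∑ i, c i • g i‖ ≤ ∑ i, |c i| * r := by
        refine norm_sum_le_of_le _ fun i _ => ?_
        rw [norm_smul, Real.norm_eq_abs]
        gcongr
        exact hK _ (hg i)
    _ ≤ r := by
        rw [← Finset.sum_mul]
        exact mul_le_of_le_one_left hr hc

theorem greedyError_le_entropyNumber_of_walshCoeff_bound {X : Type*} [NormedAddCommGroup X]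
    [NormedSpace ℝ X] {n : ℕ} (hn : 1 ≤ n) {R : ℝ}
    (hR : ∀ x : (Fin n → Bool) → X, (∀ s, ‖x s‖ ≤ 1) → ∑ k, ‖walshCoeff x k‖ ≤ R)
    {K : Set X} (hK : Bornology.IsBounded K) {γ : ℝ} (hγ : 0 < γ) {f : ℕ → X}
    (hf : IsWeakGreedy γ K f) :
    greedyError K f n ≤ 2 * γ⁻¹ * R * entropyNumber n (symConvexHull K) := by
  have hR0 : 0 ≤ R := (Finset.sum_nonneg fun k _ => norm_nonneg _).trans (hR 0 (by simp))
  have key (ε : ℝ) (hε : 0 < ε) (c : Fin (2 ^ n) → X)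
      (hc : symConvexHull K ⊆ ⋃ i, Metric.closedBall (c i) ε) :
      greedyError K f n ≤ 2 * γ⁻¹ * R * ε := by
    refine csSup_le ⟨_, f 0, (hf 0).1, rfl⟩ ?_
    rintro _ ⟨g, hg, rfl⟩
    choose l hl1 hl0 hlf using fun k : Fin n =>
      exists_dual_apply_eq_infDist (spanFirst f k) (f k)
    have hprod := prod_apply_le_of_cover hR hε c hc (fun k => f k) (fun k => (hf k).1) l hl1
      fun j k hkj => hl0 j _ (Submodule.subset_span ⟨k, hkj, rfl⟩)
    have hd (k : Fin n) : γ * Metric.infDist g (spanFirst f n) ≤ l k (f k) := by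
      rw [hlf]
      refine le_trans ?_ ((hf k).2 g hg)
      refine mul_le_mul_of_nonneg_left (Metric.infDist_le_infDist_of_subset ?_ ?_) hγ.le
      · exact Submodule.span_mono (Set.image_mono fun i hi => lt_trans hi k.2)
      · exact ⟨0, Submodule.zero_mem _⟩
    have hpow : (γ * Metric.infDist g (spanFirst f n)) ^ n ≤ (2 * R * ε) ^ n := by
      refine le_trans ?_ hprod
      calc _ = ∏ _k : Fin n, γ * Metric.infDist g (spanFirst f n) := by simp
        _ ≤ _ := Finset.prod_le_prod
          (fun _ _ => mul_nonneg hγ.le Metric.infDist_nonneg) fun k _ => hd k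
    have := le_of_pow_le_pow_left₀ (by omega) (by positivity) hpow
    calc Metric.infDist g (spanFirst f n) ≤ (2 * R * ε) / γ := by
          rw [le_div_iff₀ hγ]
          linarith
      _ = _ := by ring
  obtain ⟨r, hr0, hr⟩ := hK.exists_pos_norm_le
  have hne : {ε : ℝ | 0 < ε ∧ ∃ c : Fin (2 ^ n) → X,
      symConvexHull K ⊆ ⋃ i, Metric.closedBall (c i) ε}.Nonempty :=
    ⟨r, hr0, 0, fun x hx => Set.mem_iUnion.2
      ⟨⟨0, by positivity⟩, symConvexHull_subset_closedBall hr hr0.le hx⟩⟩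
  rcases hR0.eq_or_lt with rfl | hRpos
  · obtain ⟨ε, hε, c, hc⟩ := hne
    simpa using key ε hε c hc
  have hC : 0 < 2 * γ⁻¹ * R := by positivity
  rw [← div_le_iff₀' hC]
  refine le_csInf hne ?_
  rintro ε ⟨hε, c, hc⟩
  rw [div_le_iff₀' hC]
  exact key ε hε c hc

lemma norm_walshCoeff_le_one {X : Type*} [NormedAddCommGroup X] [NormedSpace ℝ X] {n : ℕ}
    {x : (Fin n → Bool) → X} (hx : ∀ s, ‖x s‖ ≤ 1) (k : Fin n) : ‖walshCoeff x k‖ ≤ 1 := by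
  rw [walshCoeff, norm_smul, norm_inv, norm_pow, Real.norm_ofNat,
    inv_mul_le_iff₀ (by positivity), mul_one]
  calc ‖∑ s, boolSign (s k) • x s‖ ≤ ∑ _s : Fin n → Bool, (1 : ℝ) := by
        refine norm_sum_le_of_le _ fun s _ => ?_
        rw [norm_smul, Real.norm_eq_abs, abs_boolSign, one_mul]
        exact hx s
    _ = 2 ^ n := by simp

section Lp

variable {Ω : Type*} [MeasurableSpace Ω] {μ : Measure Ω} {p : ℝ≥0∞}

lemma walshCoeff_coeFn_ae {n : ℕ} (x : (Fin n → Bool) → Lp ℝ p μ) :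
    ∀ᵐ ω ∂μ, ∀ k, walshCoeff x k ω = walshCoeff (fun s => x s ω) k := by
  refine ae_all_iff.2 fun k => ?_
  have h1 : ∀ᵐ ω ∂μ, ∀ s, (boolSign (s k) • x s : Lp ℝ p μ) ω = boolSign (s k) • x s ω :=
    ae_all_iff.2 fun s => Lp.coeFn_smul _ _
  filter_upwards [h1, Lp.coeFn_smul ((2 : ℝ) ^ n)⁻¹ (∑ s, boolSign (s k) • x s),
    Lp.coeFn_finsetSum Finset.univ fun s => boolSign (s k) • x s] with ω h1 h2 h3
  rw [walshCoeff, h2, Pi.smul_apply, h3, Finset.sum_apply]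
  simp only [h1, walshCoeff]

lemma Lp_norm_rpow_eq_integral (hp0 : p ≠ 0) (hp : p ≠ ∞) (x : Lp ℝ p μ) :
    ‖x‖ ^ p.toReal = ∫ ω, |x ω| ^ p.toReal ∂μ := by
  have hpos := ENNReal.toReal_pos hp0 hp
  rw [Lp.norm_def, toReal_eLpNorm (Lp.aestronglyMeasurable x),
    lpNorm_eq_integral_norm_rpow_toReal hp0 hp (Lp.aestronglyMeasurable x),
    ← Real.rpow_mul (integral_nonneg fun ω => by positivity), inv_mul_cancel₀ hpos.ne',
    Real.rpow_one]
  simp only [Real.norm_eq_abs]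

/-- A pointwise inequality for Walsh coefficients of scalars integrates to one in `L_p`. -/
lemma sum_norm_rpow_walshCoeff_le [Fact (1 ≤ p)] (hp0 : p ≠ 0) (hp : p ≠ ∞) {n : ℕ} {A : ℝ} (hA : 0 ≤ A)
    (hpt : ∀ x : (Fin n → Bool) → ℝ, ∑ k, |walshCoeff x k| ^ p.toReal ≤
      A * ∑ s, ((2 : ℝ) ^ n)⁻¹ * |x s| ^ p.toReal)
    {x : (Fin n → Bool) → Lp ℝ p μ} (hx : ∀ s, ‖x s‖ ≤ 1) :
    ∑ k, ‖walshCoeff x k‖ ^ p.toReal ≤ A := by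
  have hint (y : Lp ℝ p μ) : Integrable (fun ω => |y ω| ^ p.toReal) μ := by
    simpa only [Real.norm_eq_abs] using (Lp.memLp y).integrable_norm_rpow hp0 hp
  calc ∑ k, ‖walshCoeff x k‖ ^ p.toReal = ∫ ω, ∑ k, |walshCoeff x k ω| ^ p.toReal ∂μ := by
        rw [integral_finsetSum _ fun k _ => hint _]
        simp only [Lp_norm_rpow_eq_integral hp0 hp]
    _ ≤ ∫ ω, A * ∑ s, ((2 : ℝ) ^ n)⁻¹ * |x s ω| ^ p.toReal ∂μ := by
        refine integral_mono_ae (integrable_finsetSum _ fun k _ => hint _)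
          ((integrable_finsetSum _ fun s _ => (hint _).const_mul _).const_mul _) ?_
        filter_upwards [walshCoeff_coeFn_ae x] with ω hω
        simp only [hω]
        exact hpt _
    _ = A * ∑ s, ((2 : ℝ) ^ n)⁻¹ * ‖x s‖ ^ p.toReal := by
        rw [integral_const_mul, integral_finsetSum _ fun s _ => (hint _).const_mul _]
        simp only [integral_const_mul, Lp_norm_rpow_eq_integral hp0 hp]
    _ ≤ A * ∑ _s : Fin n → Bool, ((2 : ℝ) ^ n)⁻¹ * 1 := by
        gcongr with s
        exact Real.rpow_le_one (norm_nonneg _) (hx s) ENNReal.toReal_nonneg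
    _ = A := by simp

lemma sum_norm_walshCoeff_le_of_rpow_le {n : ℕ} [Fact (1 ≤ p)] (hp : 1 ≤ p.toReal) {β : ℝ}
    {x : (Fin n → Bool) → Lp ℝ p μ} (hn : 1 ≤ n)
    (h : ∑ k, ‖walshCoeff x k‖ ^ p.toReal ≤ (n : ℝ) ^ β) :
    ∑ k, ‖walshCoeff x k‖ ≤ (n : ℝ) ^ ((p.toReal - 1 + β) / p.toReal) := by
  have hn0 : (0 : ℝ) < n := by positivity
  have h1 := Real.rpow_sum_le_const_mul_sum_rpow_of_nonneg Finset.univ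
    (f := fun k => ‖walshCoeff x k‖) hp fun _ _ => norm_nonneg _
  have hp0 : 0 < p.toReal := by linarith
  rw [← Real.rpow_le_rpow_iff (by positivity) (by positivity) hp0, ← Real.rpow_mul hn0.le,
    div_mul_cancel₀ _ hp0.ne', Real.rpow_add hn0]
  refine h1.trans ?_
  rw [Finset.card_univ, Fintype.card_fin]
  gcongr

theorem sum_norm_walshCoeff_Lp_le [hp1 : Fact (1 ≤ p)] {n : ℕ} (hn : 1 ≤ n)
    {x : (Fin n → Bool) → Lp ℝ p μ} (hx : ∀ s, ‖x s‖ ≤ 1) :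
    ∑ k, ‖walshCoeff x k‖ ≤ (n : ℝ) ^ ((1 / 2 : ℝ) + |1 / 2 - (1 / p).toReal|) := by
  have htriv : ∑ k, ‖walshCoeff x k‖ ≤ (n : ℝ) := by
    calc ∑ k, ‖walshCoeff x k‖ ≤ ∑ _k : Fin n, (1 : ℝ) :=
          Finset.sum_le_sum fun k _ => norm_walshCoeff_le_one hx k
      _ = n := by simp
  rcases eq_or_ne p ∞ with rfl | hptop
  · convert htriv
    norm_num [abs_of_pos]
  have hp0 : p ≠ 0 := (zero_lt_one.trans_le hp1.out).ne'
  set r := p.toReal with hr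
  have hr1 : 1 ≤ r := by
    simpa using ENNReal.toReal_mono hptop hp1.out
  have hrinv : (1 / p).toReal = 1 / r := by simp [hr]
  have hr0 : 0 < r := by linarith
  rw [hrinv]
  rcases hr1.eq_or_lt with h1 | h1
  · convert htriv
    rw [← h1]
    norm_num [abs_of_neg]
  rcases le_total r 2 with h2 | h2
  · convert sum_norm_walshCoeff_le_of_rpow_le hr1 hn (sum_norm_rpow_walshCoeff_le hp0 hptop
      (by positivity) (fun x => sum_rpow_walshCoeff_le_of_le_two x h1 h2) hx) using 2
    have : 1 / 2 ≤ 1 / r := one_div_le_one_div_of_le hr0 h2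
    rw [abs_of_nonpos (by linarith), ← hr]
    field_simp
    ring
  · convert sum_norm_walshCoeff_le_of_rpow_le (β := 0) hr1 hn ((sum_norm_rpow_walshCoeff_le hp0
      hptop zero_le_one
      (fun x => by simpa using sum_rpow_walshCoeff_le_of_two_le x h2) hx).trans_eq
      (Real.rpow_zero _).symm) using 2
    have : 1 / r ≤ 1 / 2 := one_div_le_one_div_of_le two_pos h2
    rw [abs_of_nonneg (by linarith), ← hr]
    field_simp
    ring

end Lp

end RademacherVolume

open MeasureTheory in
/-- there is an absolute constant `C` with
`σ_n(K) ≤ C γ⁻¹ n^{1/2 + |1/2 - 1/p|} ε_n(co(K))` for the weak greedy algorithm in `L_p(μ)`. -/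
theorem weakGreedy_error_le_entropy_Lp :
    ∃ C : ℝ, 0 < C ∧
      ∀ (Ω : Type) (_ : MeasurableSpace Ω) (μ : Measure Ω) (p : ℝ≥0∞) (_ : Fact (1 ≤ p))
        (K : Set (Lp ℝ p μ)), IsCompact K →
        ∀ γ : ℝ, γ ∈ Set.Ioc (0 : ℝ) 1 →
        ∀ f : ℕ → Lp ℝ p μ, IsWeakGreedy γ K f →
        ∀ n : ℕ, 1 ≤ n →
          greedyError K f n
            ≤ C * γ⁻¹ * (n : ℝ) ^ ((1 / 2 : ℝ) + |1 / 2 - (1 / p).toReal|) *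
                entropyNumber n (symConvexHull K) := by
  refine ⟨2, two_pos, fun Ω _ μ p _ K hK γ hγ f hf n hn => ?_⟩
  have hR (x : (Fin n → Bool) → Lp ℝ p μ) (hx : ∀ s, ‖x s‖ ≤ 1) :=
    sum_norm_walshCoeff_Lp_le hn hx
  exact greedyError_le_entropyNumber_of_walshCoeff_bound hn hR hK.isBounded hγ.1 hf
end

section
/- Let K be a compact subset of a real Banach space X and let δ ≥ 1 be a constant such that every n-dimensional subspace Y of X admits a linear isomorphism T : Y → ℓ_2^n with ‖T‖·‖T^{−1}‖ ≤ δ. Then the Kolmogorov n-width satisfies d_n(K) ≤ δ (n! V_n)^{1/n} ε_n(co(K)) for all n ≥ 1. -/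
open scoped RealInnerProductSpace

open MeasureTheory
open scoped ENNReal

/-- The Brunn–Minkowski inequality for nonempty compact subsets of the line. -/
theorem volume_add_volume_le_of_isCompact {A B S : Set ℝ} (hA : IsCompact A) (hB : IsCompact B)
    (hA₀ : A.Nonempty) (hB₀ : B.Nonempty) (hS : ∀ a ∈ A, ∀ b ∈ B, a + b ∈ S) :
    volume A + volume B ≤ volume S := by
  obtain ⟨M, hM, hMub⟩ := hA.exists_isGreatest hA₀
  obtain ⟨m, hm, hmlb⟩ := hB.exists_isLeast hB₀
  have hA' : volume ((fun x => x + -m) ⁻¹' A) = volume A := measure_preimage_add_right _ _ _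
  have hB' : volume ((fun x => x + -M) ⁻¹' B) = volume B := measure_preimage_add_right _ _ _
  have hdisj : AEDisjoint volume ((fun x => x + -m) ⁻¹' A) ((fun x => x + -M) ⁻¹' B) := by
    refine measure_mono_null (t := {M + m}) ?_ (by simp)
    rintro x ⟨hxA, hxB⟩
    have h₁ := hMub hxA
    have h₂ := hmlb hxB
    simp only [Set.mem_singleton_iff]
    linarith
  rw [← hA', ← hB', ← measure_union₀
    ((hB.measurableSet.preimage (by fun_prop)).nullMeasurableSet) hdisj]
  refine measure_mono ?_
  rintro x (hx | hx)
  · simpa using hS _ hx _ hm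
  · simpa using hS _ hM _ hx

/-- The Brunn–Minkowski inequality for midpoints of nonempty measurable subsets of the line. -/
theorem volume_add_volume_le_two_mul {A B S : Set ℝ} (hA : MeasurableSet A)
    (hB : MeasurableSet B) (hA₀ : A.Nonempty) (hB₀ : B.Nonempty)
    (hS : ∀ a ∈ A, ∀ b ∈ B, (a + b) / 2 ∈ S) :
    volume A + volume B ≤ 2 * volume S := by
  obtain ⟨a₀, ha₀⟩ := hA₀
  obtain ⟨b₀, hb₀⟩ := hB₀
  have hS2 : volume ((fun x : ℝ => x * 2⁻¹) ⁻¹' S) = 2 * volume S := by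
    rw [Real.volume_preimage_mul_right (by norm_num)]
    simp
  rw [hA.measure_eq_iSup_isCompact, hB.measure_eq_iSup_isCompact]
  simp_rw [iSup_and']
  refine ENNReal.biSup_add_biSup_le' ⟨∅, by simp⟩ ⟨∅, by simp⟩ ?_
  rintro A' ⟨hA', hAc⟩ B' ⟨hB', hBc⟩
  refine (add_le_add (measure_mono (Set.subset_insert a₀ A'))
    (measure_mono (Set.subset_insert b₀ B'))).trans ?_
  rw [← hS2]
  exact volume_add_volume_le_of_isCompact (hAc.insert a₀) (hBc.insert b₀)
    (Set.insert_nonempty _ _) (Set.insert_nonempty _ _) fun a ha b hb =>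
      hS a (Set.insert_subset ha₀ hA' ha) b (Set.insert_subset hb₀ hB' hb)

/-- One-dimensional Prékopa–Leindler inequality, in arithmetic-mean form, for functions of
supremum one. -/
theorem lintegral_add_lintegral_le_two_mul {f g h : ℝ → ℝ} (hf : Measurable f)
    (hg : Measurable g) (hh : Measurable h) (hf₀ : 0 ≤ f) (hg₀ : 0 ≤ g) (hh₀ : 0 ≤ h)
    (hf₁ : ∀ x, f x ≤ 1) (hg₁ : ∀ x, g x ≤ 1)
    (hf_sup : ∀ t < 1, ∃ x, t < f x) (hg_sup : ∀ t < 1, ∃ x, t < g x)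
    (H : ∀ x y, f x * g y ≤ h ((x + y) / 2) ^ 2) :
    (∫⁻ x, ENNReal.ofReal (f x)) + ∫⁻ x, ENNReal.ofReal (g x) ≤
      2 * ∫⁻ x, ENNReal.ofReal (h x) := by
  rw [lintegral_eq_lintegral_meas_lt _ (.of_forall hf₀) hf.aemeasurable,
    lintegral_eq_lintegral_meas_lt _ (.of_forall hg₀) hg.aemeasurable,
    lintegral_eq_lintegral_meas_lt _ (.of_forall hh₀) hh.aemeasurable]
  have hm : Measurable fun t : ℝ => volume {a | t < f a} :=
    Antitone.measurable fun s t hst => measure_mono fun a ha => lt_of_le_of_lt hst ha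
  rw [← lintegral_add_left hm, ← lintegral_const_mul' _ _ (by simp)]
  refine setLIntegral_mono' measurableSet_Ioi fun t (ht : 0 < t) => ?_
  rcases lt_or_ge t 1 with ht₁ | ht₁
  · refine volume_add_volume_le_two_mul (measurableSet_lt measurable_const hf)
      (measurableSet_lt measurable_const hg) (hf_sup t ht₁) (hg_sup t ht₁) fun a ha b hb => ?_
    simp only [Set.mem_ofPred_eq] at ha hb ⊢
    refine lt_of_pow_lt_pow_left₀ 2 (hh₀ _) (lt_of_lt_of_le ?_ (H a b))
    nlinarith
  · have h₁ : {a | t < f a} = ∅ := by ext a; simpa using (hf₁ a).trans ht₁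
    have h₂ : {a | t < g a} = ∅ := by ext a; simpa using (hg₁ a).trans ht₁
    simp [h₁, h₂]

theorem ENNReal.mul_le_sq_of_add_le_two_mul {a b c : ℝ≥0∞} (h : a + b ≤ 2 * c) :
    a * b ≤ c ^ 2 := by
  rcases eq_or_ne c ⊤ with rfl | hc
  · simp
  have hab : a + b ≠ ⊤ := ne_top_of_le_ne_top (by finiteness) h
  have ha : a ≠ ⊤ := fun h => by simp [h] at hab
  have hb : b ≠ ⊤ := fun h => by simp [h] at hab
  lift a to NNReal using ha
  lift b to NNReal using hb
  lift c to NNReal using hc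
  norm_cast at h ⊢
  have h' : (a : ℝ) + b ≤ 2 * c := by exact_mod_cast h
  have : (a : ℝ) * b ≤ c ^ 2 := by
    nlinarith [sq_nonneg ((a : ℝ) - b), a.2, b.2, c.2, mul_self_le_mul_self (add_nonneg a.2 b.2) h']
  exact_mod_cast this

/-- One-dimensional Prékopa–Leindler inequality for bounded functions. -/
theorem lintegral_mul_lintegral_le_sq_of_bounded {f g h : ℝ → ℝ≥0∞} (hf : Measurable f)
    (hg : Measurable g) (hh : Measurable h) (hf_top : ⨆ x, f x ≠ ⊤) (hg_top : ⨆ x, g x ≠ ⊤)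
    (H : ∀ x y, f x * g y ≤ h ((x + y) / 2) ^ 2) :
    (∫⁻ x, f x) * ∫⁻ x, g x ≤ (∫⁻ x, h x) ^ 2 := by
  set F := ⨆ x, f x
  set G := ⨆ x, g x
  have hfF : ∀ x, f x ≤ F := le_iSup f
  have hgG : ∀ x, g x ≤ G := le_iSup g
  rcases eq_or_ne F 0 with hF₀ | hF₀
  · simp [funext fun x => le_zero_iff.1 ((hfF x).trans_eq hF₀)]
  rcases eq_or_ne G 0 with hG₀ | hG₀
  · simp [funext fun x => le_zero_iff.1 ((hgG x).trans_eq hG₀)]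
  have normalize : ∀ {u : ℝ → ℝ≥0∞} {U : ℝ≥0∞}, (∀ x, u x ≤ U) → ∀ x, u x / U ≤ 1 :=
    fun hu x => ENNReal.div_le_of_le_mul (by simpa using hu x)
  have approx : ∀ {u : ℝ → ℝ≥0∞}, ⨆ x, u x ≠ 0 → ⨆ x, u x ≠ ⊤ →
      ∀ t : ℝ, t < 1 → ∃ x, t < (u x / ⨆ x, u x).toReal := fun {u} h₀ h_top t ht => by
    have h₁ : ENNReal.ofReal t * ⨆ x, u x < ⨆ x, u x := by
      calc ENNReal.ofReal t * ⨆ x, u x < 1 * ⨆ x, u x :=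
            (ENNReal.mul_lt_mul_iff_left h₀ h_top).2 (by simpa using ht)
        _ = _ := one_mul _
    obtain ⟨x, hx⟩ := lt_iSup_iff.1 h₁
    refine ⟨x, lt_of_not_ge fun h => hx.not_ge ?_⟩
    have hx_top : u x / ⨆ x, u x ≠ ⊤ :=
      ENNReal.div_ne_top (ne_top_of_le_ne_top h_top (le_iSup u x)) h₀
    exact ENNReal.div_le_iff_le_mul (.inl h₀) (.inl h_top) |>.1
      ((ENNReal.le_ofReal_iff_toReal_le hx_top (ENNReal.toReal_nonneg.trans h)).2 h)
  obtain ⟨c, hc⟩ : ∃ c : ℝ≥0∞, c ^ 2 = F * G :=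
    ⟨(F * G) ^ (2⁻¹ : ℝ), by rw [← ENNReal.rpow_natCast, ← ENNReal.rpow_mul]; simp⟩
  have hdiv : ∀ a : ℝ≥0∞, (a / c) ^ 2 = a ^ 2 / c ^ 2 := fun a => by
    rw [div_eq_mul_inv, mul_pow, ← ENNReal.inv_pow, div_eq_mul_inv]
  have key := lintegral_add_lintegral_le_two_mul (f := fun x => (f x / F).toReal)
    (g := fun x => (g x / G).toReal) (h := fun x => (min 1 (h x / c)).toReal)
    (hf.div_const F).ennreal_toReal (hg.div_const G).ennreal_toReal
    (measurable_const.min (hh.div_const c)).ennreal_toReal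
    (fun _ => ENNReal.toReal_nonneg) (fun _ => ENNReal.toReal_nonneg)
    (fun _ => ENNReal.toReal_nonneg)
    (fun x => ENNReal.toReal_le_of_le_ofReal zero_le_one (by simpa using normalize hfF x))
    (fun x => ENNReal.toReal_le_of_le_ofReal zero_le_one (by simpa using normalize hgG x))
    (approx hF₀ hf_top) (approx hG₀ hg_top) fun x y => by
      rw [← ENNReal.toReal_mul, ← ENNReal.toReal_pow]
      refine ENNReal.toReal_mono
        (ENNReal.pow_ne_top (ne_top_of_le_ne_top ENNReal.one_ne_top (min_le_left _ _))) ?_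
      have h₁ : f x / F * (g y / G) ≤ 1 := mul_le_one' (normalize hfF x) (normalize hgG y)
      have h₂ : f x / F * (g y / G) ≤ (h ((x + y) / 2) / c) ^ 2 := by
        rw [hdiv, hc, ← ENNReal.mul_div_mul_comm (.inl hF₀) (.inl hf_top)]
        exact ENNReal.div_le_div_right (H x y) _
      rcases le_total 1 (h ((x + y) / 2) / c) with h₃ | h₃
      · simpa [min_eq_left h₃] using h₁
      · simpa [min_eq_right h₃] using h₂
  simp_rw [ENNReal.ofReal_toReal (ne_top_of_le_ne_top ENNReal.one_ne_top (normalize hfF _)),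
    ENNReal.ofReal_toReal (ne_top_of_le_ne_top ENNReal.one_ne_top (normalize hgG _)),
    ENNReal.ofReal_toReal (ne_top_of_le_ne_top ENNReal.one_ne_top (min_le_left _ _))] at key
  have key' := ENNReal.mul_le_sq_of_add_le_two_mul
    (key.trans (mul_le_mul_right (lintegral_mono fun x => min_le_right _ _) 2))
  simp_rw [div_eq_mul_inv] at key'
  rw [lintegral_mul_const _ hf, lintegral_mul_const _ hg, lintegral_mul_const _ hh] at key'
  rw [← div_eq_mul_inv, ← div_eq_mul_inv, ← div_eq_mul_inv, hdiv, hc,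
    ← ENNReal.mul_div_mul_comm (.inl hF₀) (.inl hf_top)] at key'
  have hFG₀ : F * G ≠ 0 := mul_ne_zero hF₀ hG₀
  have hFG_top : F * G ≠ ⊤ := ENNReal.mul_ne_top hf_top hg_top
  rwa [ENNReal.div_le_iff hFG₀ hFG_top, ENNReal.div_mul_cancel hFG₀ hFG_top] at key'

/-- One-dimensional Prékopa–Leindler inequality. -/
theorem lintegral_mul_lintegral_le_sq_real {f g h : ℝ → ℝ≥0∞} (hf : Measurable f)
    (hg : Measurable g) (hh : Measurable h)
    (H : ∀ x y, f x * g y ≤ h ((x + y) / 2) ^ 2) :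
    (∫⁻ x, f x) * ∫⁻ x, g x ≤ (∫⁻ x, h x) ^ 2 := by
  have key : ∀ {u : ℝ → ℝ≥0∞}, Measurable u →
      ∫⁻ x, u x = ⨆ k : ℕ, ∫⁻ x, min (u x) k := fun {u} hu => by
    rw [← lintegral_iSup (fun k => hu.min measurable_const)
      fun i j hij x => min_le_min_left _ (by exact_mod_cast hij)]
    congr with x
    rw [← inf_iSup_eq, ENNReal.iSup_natCast, inf_top_eq]
  rw [key hf, key hg, ENNReal.iSup_mul]
  refine iSup_le fun i => ?_
  rw [ENNReal.mul_iSup]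
  refine iSup_le fun j => ?_
  refine lintegral_mul_lintegral_le_sq_of_bounded (hf.min measurable_const)
    (hg.min measurable_const) hh
    (ne_top_of_le_ne_top (ENNReal.natCast_ne_top i) (iSup_le fun x => min_le_right _ _))
    (ne_top_of_le_ne_top (ENNReal.natCast_ne_top j) (iSup_le fun x => min_le_right _ _))
    fun x y => (mul_le_mul' (min_le_left _ _) (min_le_left _ _)).trans (H x y)

/-- The Prékopa–Leindler inequality on `ℝⁿ` at the midpoint. -/
theorem lintegral_mul_lintegral_le_sq {n : ℕ} {f g h : (Fin n → ℝ) → ℝ≥0∞} (hf : Measurable f)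
    (hg : Measurable g) (hh : Measurable h)
    (H : ∀ x y, f x * g y ≤ h ((2⁻¹ : ℝ) • (x + y)) ^ 2) :
    (∫⁻ x, f x) * ∫⁻ x, g x ≤ (∫⁻ x, h x) ^ 2 := by
  induction n with
  | zero =>
    have h := H default default
    rw [Subsingleton.elim ((2⁻¹ : ℝ) • ((default : Fin 0 → ℝ) + default)) default] at h
    simpa only [Measure.volume_pi_eq_dirac (default : Fin 0 → ℝ), lintegral_dirac] using h
  | succ n ih =>
    have hcons : Measurable fun p : (Fin n → ℝ) × ℝ => (Fin.cons p.2 p.1 : Fin (n + 1) → ℝ) := by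
      refine measurable_pi_iff.2 fun i => ?_
      refine Fin.cases ?_ (fun i => ?_) i
      · simpa using measurable_snd
      · exact (measurable_pi_apply i).comp measurable_fst
    have key : ∀ {u : (Fin (n + 1) → ℝ) → ℝ≥0∞}, Measurable u →
        ∫⁻ x, u x = ∫⁻ x : Fin n → ℝ, ∫⁻ t : ℝ, u (Fin.cons t x) := fun {u} hu => by
      have hmp := (volume_preserving_piFinSuccAbove (fun _ : Fin (n + 1) => ℝ) 0).symm
      rw [← hmp.lintegral_comp_emb (MeasurableEquiv.measurableEmbedding _), Measure.volume_eq_prod,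
        lintegral_prod_symm]
      · simp [Fin.insertNthEquiv]
      · exact (hu.comp (MeasurableEquiv.measurable _)).aemeasurable
    have hmeas : ∀ {u : (Fin (n + 1) → ℝ) → ℝ≥0∞}, Measurable u →
        Measurable fun x : Fin n → ℝ => ∫⁻ t : ℝ, u (Fin.cons t x) := fun {u} hu =>
      (hu.comp hcons).lintegral_prod_right'
    rw [key hf, key hg, key hh]
    refine ih (hmeas hf) (hmeas hg) (hmeas hh) fun x y => ?_
    refine lintegral_mul_lintegral_le_sq_real
      (hf.comp (hcons.comp measurable_prodMk_left)) (hg.comp (hcons.comp measurable_prodMk_left))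
      (hh.comp (hcons.comp measurable_prodMk_left)) fun s t => ?_
    convert H (Fin.cons s x) (Fin.cons t y) using 3
    ext i
    refine Fin.cases ?_ (fun i => ?_) i
    · simp [div_eq_inv_mul]
    · simp [mul_add]

/-- A set whose midpoint-differences lie in `S` has at most the volume of `S`. -/
theorem volume_le_of_half_sub_mem {n : ℕ} {A S : Set (Fin n → ℝ)} (hA : MeasurableSet A)
    (hS : MeasurableSet S) (H : ∀ x ∈ A, ∀ y ∈ A, (2⁻¹ : ℝ) • (x - y) ∈ S) :
    volume A ≤ volume S := by
  have h := lintegral_mul_lintegral_le_sq (f := A.indicator 1) (g := (-A).indicator 1)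
    (h := S.indicator 1) (measurable_one.indicator hA) (measurable_one.indicator hA.neg)
    (measurable_one.indicator hS) fun x y => by
      by_cases hx : x ∈ A
      · by_cases hy : y ∈ -A
        · have := H x hx (-y) hy
          rw [sub_neg_eq_add] at this
          rw [Set.indicator_of_mem hx, Set.indicator_of_mem hy, Set.indicator_of_mem this]
          simp
        · simp [Set.indicator_of_notMem hy]
      · simp [hx]
  rw [lintegral_indicator_one hA, lintegral_indicator_one hA.neg, lintegral_indicator_one hS,
    Measure.measure_neg, ← sq] at h
  exact (ENNReal.pow_le_pow_left_iff two_ne_zero).1 h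

theorem unitBallVol_pos (n : ℕ) : 0 < unitBallVol n :=
  div_pos (Real.rpow_pos_of_pos Real.pi_pos _) (Real.Gamma_pos_of_pos (by positivity))

/-- The volume of the unit ball of `ℓ¹` in dimension `n`. -/
theorem volume_sum_abs_le_one (n : ℕ) (hn : 1 ≤ n) :
    volume {c : Fin n → ℝ | ∑ i, |c i| ≤ 1} = ENNReal.ofReal (2 ^ n / n.factorial) := by
  have : Nonempty (Fin n) := ⟨⟨0, hn⟩⟩
  have h := volume_sum_rpow_le (Fin n) le_rfl 1
  have h2 : Real.Gamma (1 + 1) = 1 := by norm_num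
  simpa [Real.Gamma_nat_eq_factorial, h2] using h

theorem volume_euclidean_norm_le (n : ℕ) (hn : 1 ≤ n) {r : ℝ} (hr : 0 ≤ r) :
    volume {y : Fin n → ℝ | ‖WithLp.toLp 2 y‖ ≤ r} = ENNReal.ofReal (r ^ n * unitBallVol n) := by
  have : Nonempty (Fin n) := ⟨⟨0, hn⟩⟩
  have h₁ := (PiLp.volume_preserving_toLp (Fin n)).measure_preimage
    (s := Metric.closedBall 0 r) Metric.isClosed_closedBall.measurableSet.nullMeasurableSet
  have h₂ : (WithLp.toLp 2 ⁻¹' Metric.closedBall (0 : EuclideanSpace ℝ (Fin n)) r) =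
      {y : Fin n → ℝ | ‖WithLp.toLp 2 y‖ ≤ r} := by
    ext y; simp
  rw [← h₂, h₁, EuclideanSpace.volume_closedBall, ENNReal.ofReal_mul (by positivity),
    ENNReal.ofReal_pow hr, Fintype.card_fin, unitBallVol, Real.sqrt_eq_rpow, ← Real.rpow_natCast,
    ← Real.rpow_mul Real.pi_nonneg]
  congr 4
  ring

/-- A family in which each member has distance at least `s` to the span of the preceding ones
has determinant at least `s ^ n` in its Gram–Schmidt basis. -/
theorem pow_le_abs_det_gramSchmidtOrthonormalBasis {n : ℕ} {v : Fin n → EuclideanSpace ℝ (Fin n)}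
    {s : ℝ} (hs : 0 < s)
    (hv : ∀ i, ∀ w ∈ Submodule.span ℝ (v '' Set.Iio i), s ≤ ‖v i - w‖) :
    s ^ n ≤
      |(InnerProductSpace.gramSchmidtOrthonormalBasis (𝕜 := ℝ) (by simp) v).toBasis.det v| := by
  rw [InnerProductSpace.gramSchmidtOrthonormalBasis_det, Finset.abs_prod]
  have key : ∀ i, s ≤
      |⟪InnerProductSpace.gramSchmidtOrthonormalBasis (𝕜 := ℝ) (by simp) v i, v i⟫| := fun i => by
    set g := InnerProductSpace.gramSchmidt ℝ v with hg
    have hvi := InnerProductSpace.gramSchmidt_def'' ℝ v i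
    set w := ∑ j ∈ Finset.Iio i, (⟪g j, v i⟫ / (‖g j‖ : ℝ) ^ 2) • g j with hw
    replace hvi : v i = g i + w := hvi
    have hw_mem : w ∈ Submodule.span ℝ (v '' Set.Iio i) := by
      rw [← InnerProductSpace.span_gramSchmidt_Iio ℝ v i]
      exact Submodule.sum_mem _ fun j hj => Submodule.smul_mem _ _
        (Submodule.subset_span ⟨j, by simpa using hj, rfl⟩)
    have hnorm : s ≤ ‖g i‖ := by
      have := hv i w hw_mem
      rwa [hvi, add_sub_cancel_right] at this
    have hpos : 0 < ‖g i‖ := hs.trans_le hnorm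
    have horth : ⟪g i, w⟫ = 0 := by
      rw [hw, inner_sum]
      refine Finset.sum_eq_zero fun j hj => ?_
      rw [inner_smul_right, hg,
        InnerProductSpace.gramSchmidt_orthogonal ℝ v (Finset.mem_Iio.1 hj).ne', mul_zero]
    have hne : InnerProductSpace.gramSchmidtNormed ℝ v i ≠ 0 := by
      simpa [InnerProductSpace.gramSchmidtNormed] using norm_pos_iff.1 hpos
    rw [InnerProductSpace.gramSchmidtOrthonormalBasis_apply _ hne,
      InnerProductSpace.gramSchmidtNormed, ← hg, inner_smul_left, hvi, inner_add_right, horth,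
      real_inner_self_eq_norm_sq]
    simp only [RCLike.ofReal_real_eq_id, id, map_inv₀, conj_trivial, add_zero]
    rw [sq, inv_mul_cancel_left₀ hpos.ne', abs_norm]
    exact hnorm
  calc s ^ n = ∏ _i : Fin n, s := by simp
    _ ≤ _ := Finset.prod_le_prod (fun _ _ => hs.le) fun i _ => key i

/-- Volume of the coefficient ellipsoid of a family whose members are well separated from the span
of the preceding ones. -/
theorem volume_norm_sum_smul_le {n : ℕ} (hn : 1 ≤ n) {v : Fin n → EuclideanSpace ℝ (Fin n)}
    {s r : ℝ} (hs : 0 < s) (hr : 0 ≤ r)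
    (hv : ∀ i, ∀ w ∈ Submodule.span ℝ (v '' Set.Iio i), s ≤ ‖v i - w‖) :
    volume {c : Fin n → ℝ | ‖∑ i, c i • v i‖ ≤ r} ≤
      ENNReal.ofReal ((r / s) ^ n * unitBallVol n) := by
  have hdet := pow_le_abs_det_gramSchmidtOrthonormalBasis hs hv
  set b := InnerProductSpace.gramSchmidtOrthonormalBasis (𝕜 := ℝ) (by simp) v
  have hpos : 0 < |b.toBasis.det v| := (pow_pos hs n).trans_le hdet
  set L := Matrix.toLin' (b.toBasis.toMatrix v) with hL
  have hLdet : LinearMap.det L = b.toBasis.det v := by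
    rw [hL, LinearMap.det_toLin', Module.Basis.det_apply]
  have hset : {c : Fin n → ℝ | ‖∑ i, c i • v i‖ ≤ r} =
      L ⁻¹' {y : Fin n → ℝ | ‖WithLp.toLp 2 y‖ ≤ r} := by
    ext c
    have : WithLp.toLp 2 (L c) = b.repr (∑ i, c i • v i) := by
      ext j
      simp [hL, Matrix.mulVec, dotProduct, Module.Basis.toMatrix_apply, mul_comm]
    rw [Set.mem_preimage, Set.mem_ofPred_eq, Set.mem_ofPred_eq, this, LinearIsometryEquiv.norm_map]
  have hV := (unitBallVol_pos n).le
  rw [hset, Measure.addHaar_preimage_linearMap _ (by rw [hLdet]; exact abs_pos.1 hpos), hLdet,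
    volume_euclidean_norm_le n hn hr, ← ENNReal.ofReal_mul (abs_nonneg _)]
  refine ENNReal.ofReal_le_ofReal ?_
  rw [abs_inv, div_pow, div_eq_inv_mul, mul_assoc]
  gcongr

theorem spanFirst_eq_span_range {X : Type*} [NormedAddCommGroup X] [NormedSpace ℝ X]
    (f : ℕ → X) (k : ℕ) :
    spanFirst f k = Submodule.span ℝ (Set.range fun i : Fin k => f i) := by
  rw [spanFirst]
  congr 1
  ext y
  constructor
  · rintro ⟨i, hi, rfl⟩
    exact ⟨⟨i, hi⟩, rfl⟩
  · rintro ⟨i, rfl⟩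
    exact ⟨i, i.2, rfl⟩

/-- A compact set contains a sequence whose first `n + 1` members each have distance at least the
Kolmogorov `n`-width to the span of the preceding ones. -/
theorem exists_seq_kolmogorovWidth_le_infDist {X : Type*} [NormedAddCommGroup X] [NormedSpace ℝ X]
    {K : Set X} (hK : IsCompact K) (hK₀ : K.Nonempty) (n : ℕ) :
    ∃ f : ℕ → X, (∀ k, f k ∈ K) ∧
      ∀ k ≤ n, kolmogorovWidth n K ≤ Metric.infDist (f k) (spanFirst f k : Set X) := by
  have hex : ∀ Y : Submodule ℝ X, ∃ g ∈ K, ∀ g' ∈ K,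
      Metric.infDist g' (Y : Set X) ≤ Metric.infDist g (Y : Set X) := fun Y =>
    hK.exists_isMaxOn hK₀ (Metric.continuous_infDist_pt _).continuousOn
  choose g hgK hg using hex
  obtain ⟨W, hW_zero, hW_succ⟩ : ∃ W : ℕ → Submodule ℝ X, W 0 = ⊥ ∧
      ∀ k, W (k + 1) = W k ⊔ Submodule.span ℝ {g (W k)} :=
    ⟨fun k => Nat.rec ⊥ (fun _ Y => Y ⊔ Submodule.span ℝ {g Y}) k, rfl, fun _ => rfl⟩
  have hW : ∀ k, W k = spanFirst (fun j => g (W j)) k := fun k => by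
    induction k with
    | zero => simp [hW_zero, spanFirst]
    | succ k ih =>
      rw [hW_succ]
      nth_rewrite 1 [ih]
      have : {i | i < k + 1} = {i | i < k} ∪ {k} := by
        ext i
        simp only [Set.mem_ofPred_eq, Set.mem_union, Set.mem_singleton_iff]
        omega
      rw [spanFirst, spanFirst, this, Set.image_union, Submodule.span_union, Set.image_singleton]
  refine ⟨fun k => g (W k), fun k => hgK _, fun k hk => ?_⟩
  rw [← hW k]
  have hfd : FiniteDimensional ℝ (W k) := by
    rw [hW k, spanFirst_eq_span_range]
    exact FiniteDimensional.span_of_finite ℝ (Set.finite_range _)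
  have hrank : Module.finrank ℝ (W k) ≤ n := by
    rw [hW k, spanFirst_eq_span_range]
    refine (finrank_range_le_card _).trans ?_
    simpa using hk
  refine csInf_le_of_le ⟨0, ?_⟩ ⟨W k, hfd, hrank, rfl⟩ ?_
  · rintro _ ⟨Y, -, -, rfl⟩
    refine Real.sSup_nonneg ?_
    rintro _ ⟨x, -, rfl⟩
    exact Metric.infDist_nonneg
  · refine csSup_le (hK₀.image _) ?_
    rintro _ ⟨x, hx, rfl⟩
    exact hg (W k) x hx

theorem entropyNumber_symConvexHull_set_nonempty {X : Type*} [NormedAddCommGroup X]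
    [NormedSpace ℝ X] {K : Set X} (hK : IsCompact K) (n : ℕ) :
    {ε : ℝ | 0 < ε ∧ ∃ c : Fin (2 ^ n) → X,
      symConvexHull K ⊆ ⋃ i, Metric.closedBall (c i) ε}.Nonempty := by
  obtain ⟨R, hR, hKR⟩ := hK.isBounded.exists_pos_norm_le
  refine ⟨R, hR, fun _ => 0, ?_⟩
  have : symConvexHull K ⊆ Metric.closedBall 0 R := by
    refine closure_minimal ?_ Metric.isClosed_closedBall
    rintro _ ⟨m, c, g, hg, hc, rfl⟩
    rw [mem_closedBall_zero_iff]
    calc ‖∑ i, c i • g i‖ ≤ ∑ i, ‖c i • g i‖ := norm_sum_le _ _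
      _ ≤ ∑ i, |c i| * R := Finset.sum_le_sum fun i _ => by
        rw [norm_smul, Real.norm_eq_abs]
        exact mul_le_mul_of_nonneg_left (hKR _ (hg i)) (abs_nonneg _)
      _ = (∑ i, |c i|) * R := (Finset.sum_mul _ _ _).symm
      _ ≤ R := mul_le_of_le_one_left hR.le hc
  exact fun x hx => Set.mem_iUnion.2 ⟨⟨0, by positivity⟩, this hx⟩

/-- Volume comparison: if `2 ^ n` balls of radius `ε` cover the symmetric convex hull of vectors
`f 0, …, f (n - 1)`, each at distance at least `d` from the span of the preceding ones, then `d`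
is bounded in terms of `ε` and the distortion of an isomorphism from their span to `ℓ₂ⁿ`. -/
theorem pow_le_of_cover {X : Type*} [NormedAddCommGroup X] [NormedSpace ℝ X] {n : ℕ} (hn : 1 ≤ n)
    {Y : Submodule ℝ X} (T : Y ≃L[ℝ] EuclideanSpace ℝ (Fin n)) {δ : ℝ}
    (hT : ‖(T : Y →L[ℝ] EuclideanSpace ℝ (Fin n))‖ *
          ‖(T.symm : EuclideanSpace ℝ (Fin n) →L[ℝ] Y)‖ ≤ δ)
    {f : Fin n → Y} {d : ℝ} (hd : 0 < d)
    (hf : ∀ i, ∀ w ∈ Submodule.span ℝ (f '' Set.Iio i), d ≤ ‖f i - w‖)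
    {ε : ℝ} (hε : 0 < ε) {x : Fin (2 ^ n) → X}
    (hx : ∀ c : Fin n → ℝ, ∑ i, |c i| ≤ 1 → ∃ j, ‖(∑ i, c i • (f i : X)) - x j‖ ≤ ε) :
    d ^ n ≤ (n.factorial * unitBallVol n) * (δ * ε) ^ n := by
  set a := ‖(T : Y →L[ℝ] EuclideanSpace ℝ (Fin n))‖
  set b := ‖(T.symm : EuclideanSpace ℝ (Fin n) →L[ℝ] Y)‖
  have hTle : ∀ y, ‖T y‖ ≤ a * ‖y‖ := (T : Y →L[ℝ] EuclideanSpace ℝ (Fin n)).le_opNorm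
  have hTsymm : ∀ y, ‖y‖ ≤ b * ‖T y‖ := fun y => by
    simpa using (T.symm : EuclideanSpace ℝ (Fin n) →L[ℝ] Y).le_opNorm (T y)
  have hfne : f ⟨0, hn⟩ ≠ 0 := fun h => by
    have := hf ⟨0, hn⟩ 0 (zero_mem _)
    rw [h, sub_zero, norm_zero] at this
    linarith
  have hb : 0 < b := by
    refine (norm_nonneg (T.symm : EuclideanSpace ℝ (Fin n) →L[ℝ] Y)).lt_of_ne fun h => ?_
    have := hTsymm (f ⟨0, hn⟩)
    rw [show b = 0 from h.symm, zero_mul] at this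
    exact hfne (norm_le_zero_iff.1 this)
  have ha : 0 ≤ a := norm_nonneg (T : Y →L[ℝ] EuclideanSpace ℝ (Fin n))
  have hv : ∀ i, ∀ w ∈ Submodule.span ℝ ((fun i => T (f i)) '' Set.Iio i),
      d / b ≤ ‖T (f i) - w‖ := fun i w hw => by
    have hw' : T.symm w ∈ Submodule.span ℝ (f '' Set.Iio i) := by
      have h := Submodule.mem_map_of_mem (f := (T.symm.toLinearEquiv : _ →ₗ[ℝ] Y)) hw
      rw [Submodule.map_span, ← Set.image_comp] at h
      simpa [Function.comp_def] using h
    rw [div_le_iff₀' hb]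
    refine (hf i _ hw').trans ((hTsymm _).trans_eq ?_)
    simp
  set S := {c : Fin n → ℝ | ‖∑ i, c i • T (f i)‖ ≤ a * ε}
  have hS : MeasurableSet S := (isClosed_le (by fun_prop) continuous_const).measurableSet
  have hvolS : volume S ≤ ENNReal.ofReal ((a * ε / (d / b)) ^ n * unitBallVol n) :=
    volume_norm_sum_smul_le hn (div_pos hd hb) (by positivity) hv
  have hpiece : ∀ j, volume {c : Fin n → ℝ | ‖(∑ i, c i • (f i : X)) - x j‖ ≤ ε} ≤ volume S :=
    fun j => by
      refine volume_le_of_half_sub_mem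
        (isClosed_le (by fun_prop) continuous_const).measurableSet hS fun c hc c' hc' => ?_
      simp only [Set.mem_ofPred_eq, S] at hc hc' ⊢
      have h₁ : ∑ i, ((2⁻¹ : ℝ) • (c - c')) i • T (f i) =
          T (∑ i, ((2⁻¹ : ℝ) • (c - c')) i • f i) := by simp
      rw [h₁]
      refine (hTle _).trans (mul_le_mul_of_nonneg_left ?_ ha)
      have h₂ : ((∑ i, ((2⁻¹ : ℝ) • (c - c')) i • f i : Y) : X) =
          (2⁻¹ : ℝ) • (((∑ i, c i • (f i : X)) - x j) - ((∑ i, c' i • (f i : X)) - x j)) := by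
        simp [sub_smul, mul_smul, Finset.smul_sum, smul_sub, mul_sub]
      rw [Submodule.coe_norm, h₂, norm_smul, Real.norm_of_nonneg (by norm_num)]
      have h₃ := norm_sub_le ((∑ i, c i • (f i : X)) - x j) ((∑ i, c' i • (f i : X)) - x j)
      linarith
  have hcover : {c : Fin n → ℝ | ∑ i, |c i| ≤ 1} ⊆
      ⋃ j, {c : Fin n → ℝ | ‖(∑ i, c i • (f i : X)) - x j‖ ≤ ε} := fun c hc =>
    Set.mem_iUnion.2 (hx c hc)
  have hV := (unitBallVol_pos n).le
  have hvol : ENNReal.ofReal (2 ^ n / n.factorial) ≤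
      ENNReal.ofReal (2 ^ n * ((a * ε / (d / b)) ^ n * unitBallVol n)) := by
    rw [← volume_sum_abs_le_one n hn]
    refine (measure_mono hcover).trans ((measure_iUnion_le _).trans ?_)
    rw [tsum_fintype]
    refine (Finset.sum_le_sum fun j _ => (hpiece j).trans hvolS).trans_eq ?_
    rw [ENNReal.ofReal_mul (p := 2 ^ n) (by positivity), Finset.sum_const, nsmul_eq_mul]
    simp [ENNReal.ofReal_pow]
  rw [ENNReal.ofReal_le_ofReal_iff (by positivity), div_eq_mul_inv,
    mul_le_mul_iff_right₀ (by positivity), inv_le_iff_one_le_mul₀ (by positivity)] at hvol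
  have hquot : a * ε / (d / b) = a * b * ε / d := by field_simp
  rw [hquot, div_pow] at hvol
  have hdn : 0 < d ^ n := pow_pos hd n
  calc d ^ n ≤ d ^ n * ((a * b * ε) ^ n / d ^ n * unitBallVol n * n.factorial) :=
        le_mul_of_one_le_right hdn.le hvol
    _ = (n.factorial * unitBallVol n) * (a * b * ε) ^ n := by field_simp
    _ ≤ _ := by gcongr

/-- Kolmogorov width vs entropy numbers in Banach spaces
(Corollary 3.1 of the paper). -/
theorem kolmogorovWidth_le_entropy_banach
    {X : Type*} [NormedAddCommGroup X] [NormedSpace ℝ X] [CompleteSpace X]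
    (K : Set X) (hK : IsCompact K) (n : ℕ) (hn : 1 ≤ n) (δ : ℝ) (hδ : 1 ≤ δ)
    (hBM : ∀ Y : Submodule ℝ X, FiniteDimensional ℝ Y → Module.finrank ℝ Y = n →
      ∃ T : Y ≃L[ℝ] EuclideanSpace ℝ (Fin n),
        ‖(T : Y →L[ℝ] EuclideanSpace ℝ (Fin n))‖ *
          ‖(T.symm : EuclideanSpace ℝ (Fin n) →L[ℝ] Y)‖ ≤ δ) :
    kolmogorovWidth n K
      ≤ δ * ((n.factorial : ℝ) * unitBallVol n) ^ ((n : ℝ)⁻¹) *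
          entropyNumber n (symConvexHull K) := by
  have hV := unitBallVol_pos n
  have hC : 0 < δ * ((n.factorial : ℝ) * unitBallVol n) ^ ((n : ℝ)⁻¹) := by positivity
  set d := kolmogorovWidth n K
  rcases le_or_gt d 0 with hd | hd
  · exact hd.trans (mul_nonneg hC.le (Real.sInf_nonneg fun ε hε => hε.1.le))
  have hK₀ : K.Nonempty := by
    by_contra hK₀
    rw [Set.not_nonempty_iff_eq_empty] at hK₀
    refine hd.not_ge (csInf_le_of_le ⟨0, ?_⟩ ⟨⊥, inferInstance, by simp, rfl⟩ (by simp [hK₀]))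
    rintro _ ⟨Y, -, -, rfl⟩
    simp [hK₀]
  obtain ⟨f, hfK, hf⟩ := exists_seq_kolmogorovWidth_le_infDist hK hK₀ n
  have hind : ∀ m ≤ n, LinearIndependent ℝ (fun i : Fin m => f i) := fun m => by
    induction m with
    | zero => exact fun _ => linearIndependent_empty_type
    | succ m ih =>
      refine fun hm => linearIndependent_finSucc'.2 ⟨ih (by omega), fun hmem => ?_⟩
      have hmem' : f m ∈ spanFirst f m := by
        rw [spanFirst_eq_span_range]
        exact hmem
      have h := hf m (by omega)
      rw [Metric.infDist_zero_of_mem hmem'] at h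
      exact hd.not_ge h
  set F : Fin n → X := fun i => f i
  set Y := Submodule.span ℝ (Set.range F)
  obtain ⟨T, hT⟩ := hBM Y (FiniteDimensional.span_of_finite ℝ (Set.finite_range F))
    (by rw [finrank_span_eq_card (hind n le_rfl), Fintype.card_fin])
  have hFY : ∀ i, F i ∈ Y := fun i => Submodule.subset_span ⟨i, rfl⟩
  rw [← div_le_iff₀' hC]
  refine le_csInf (entropyNumber_symConvexHull_set_nonempty hK n) ?_
  rintro ε ⟨hε, x, hx⟩
  rw [div_le_iff₀' hC]
  have hpow := pow_le_of_cover hn T hT (f := fun i => ⟨F i, hFY i⟩) hd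
    (fun i w hw => by
      have hw' : (w : X) ∈ spanFirst f i := by
        have h := Submodule.mem_map_of_mem (f := Y.subtype) hw
        rw [Submodule.map_span, ← Set.image_comp] at h
        refine Submodule.span_mono ?_ h
        rintro _ ⟨j, hj, rfl⟩
        exact ⟨j, hj, rfl⟩
      refine (hf i i.2.le).trans ((Metric.infDist_le_dist_of_mem hw').trans_eq ?_)
      rw [dist_eq_norm]
      rfl)
    hε (x := x) (fun c hc => by
      have hmem : ∑ i, c i • F i ∈ symConvexHull K :=
        subset_closure ⟨n, c, F, fun i => hfK i, hc, rfl⟩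
      obtain ⟨j, hj⟩ := Set.mem_iUnion.1 (hx hmem)
      exact ⟨j, by simpa [dist_eq_norm] using hj⟩)
  have hn₀ : n ≠ 0 := by omega
  refine le_of_pow_le_pow_left₀ hn₀ (by positivity) (hpow.trans_eq ?_)
  rw [mul_pow, mul_pow _ ε, mul_pow δ (_ ^ _), Real.rpow_inv_natCast_pow (by positivity) hn₀]
  ring
end

section
/- Fix α > 1 and p ∈ [1,∞]. Define x_j = 2^{−kα} whenever 2^{k−1} ≤ j ≤ 2^k − 1 (k ≥ 1), and let K = co({x_j e_j : j ≥ 1}) ⊂ ℓ_p where e_j is the j-th coordinate unit vector. Then there exists a constant C = C(α,p) such that ε_n(K)_{ℓ_p} ≤ C n^{−α − 1 + 1/p} for all n ≥ 1. -/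
open scoped RealInnerProductSpace ENNReal

/-- Rounding towards zero. -/
theorem exists_int_abs_le_abs_sub_le_one (a : ℝ) :
    ∃ m : ℤ, |(m : ℝ)| ≤ |a| ∧ |a - m| ≤ 1 ∧ |a - m| ≤ |a| := by
  rcases le_total 0 a with ha | ha
  · have h0 : (0 : ℝ) ≤ (⌊a⌋ : ℤ) := by exact_mod_cast Int.floor_nonneg.2 ha
    have h1 := Int.floor_le a
    have h2 := Int.lt_floor_add_one a
    refine ⟨⌊a⌋, ?_, ?_, ?_⟩ <;>
      simp only [abs_of_nonneg ha, abs_of_nonneg h0, abs_of_nonneg (sub_nonneg.2 h1)] <;> linarith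
  · have h0 : ((⌈a⌉ : ℤ) : ℝ) ≤ 0 := by exact_mod_cast Int.ceil_le.2 (by simpa using ha)
    have h1 := Int.le_ceil a
    have h2 := Int.ceil_lt_add_one a
    refine ⟨⌈a⌉, ?_, ?_, ?_⟩ <;>
      simp only [abs_of_nonpos ha, abs_of_nonpos h0, abs_of_nonpos (sub_nonpos.2 h1)] <;> linarith

theorem sum_Icc_neg_exp_neg_mul_abs_le {v : ℝ} (hv : 0 < v) (M : ℕ) :
    ∑ a ∈ Finset.Icc (-(M : ℤ)) M, Real.exp (-(|(a : ℝ)| * v)) ≤ 1 + 2 / (Real.exp v - 1) := by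
  have hE : 1 < Real.exp v := Real.one_lt_exp_iff.2 hv
  have key : ∀ M : ℕ, ∑ a ∈ Finset.Icc (-(M : ℤ)) M, Real.exp (-(|(a : ℝ)| * v)) =
      1 + 2 * (1 - Real.exp (-(M * v))) / (Real.exp v - 1) := by
    intro M
    induction M with
    | zero => simp
    | succ M ih =>
      have hI : Finset.Icc (-((M + 1 : ℕ) : ℤ)) ((M + 1 : ℕ) : ℤ) =
          insert (-((M + 1 : ℕ) : ℤ)) (insert ((M + 1 : ℕ) : ℤ) (Finset.Icc (-(M : ℤ)) M)) := by
        ext a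
        simp only [Finset.mem_Icc, Finset.mem_insert]
        push_cast
        omega
      have h1 : |((M : ℝ) + 1)| = M + 1 := abs_of_nonneg (by positivity)
      have h2 : Real.exp (-((M + 1) * v)) = Real.exp (-(M * v)) / Real.exp v := by
        rw [← Real.exp_sub]; congr 1; ring
      rw [hI, Finset.sum_insert, Finset.sum_insert, ih]
      · push_cast
        rw [abs_neg, h1, h2]
        have : Real.exp v - 1 ≠ 0 := by linarith
        field_simp
        ring
      · simp
      · simp only [Finset.mem_insert, Finset.mem_Icc, not_or]
        push_cast
        omega
  rw [key]
  have : 0 < Real.exp v - 1 := by linarith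
  gcongr
  have := Real.exp_pos (-(M * v))
  linarith

theorem one_add_two_div_exp_rpow_sub_one_le {α r : ℝ} (hα : 1 < α) (hr : 0 < r) :
    1 + 2 / (Real.exp ((r ^ 2) ^ α) - 1) ≤ Real.exp (16 * α * (1 / (r * (1 + r) ^ 2))) := by
  have hv : 0 < (r ^ 2) ^ α := by positivity
  set v := (r ^ 2) ^ α with hvdef
  have hq := Real.quadratic_le_exp_of_nonneg hv.le
  rcases le_total r 1 with h | h
  · have hv1 : v ≤ 1 := Real.rpow_le_one (by positivity) (by nlinarith) (by linarith)
    have h1 : 1 + 2 / (Real.exp v - 1) ≤ 3 / v := by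
      have : 2 / (Real.exp v - 1) ≤ 2 / v := by
        gcongr
        nlinarith
      have h2 : 1 ≤ 1 / v := by rw [le_div_iff₀ hv]; linarith
      have : 3 / v = 1 / v + 2 / v := by ring
      linarith
    have h2 : 1 / v ≤ Real.exp (2 * α * (1 / r)) := by
      have : 1 / r ≤ Real.exp (1 / r) := by linarith [Real.add_one_le_exp (1 / r)]
      calc 1 / v = (1 / r) ^ (2 * α) := by
            rw [hvdef, ← Real.rpow_natCast, ← Real.rpow_mul hr.le, one_div, one_div,
              Real.inv_rpow hr.le]
            norm_num
        _ ≤ (Real.exp (1 / r)) ^ (2 * α) := by gcongr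
        _ = _ := by rw [← Real.exp_mul]; congr 1; ring
    have h3 : (3 : ℝ) ≤ Real.exp (2 * (1 / r)) := by
      have : 1 ≤ 1 / r := by rw [le_div_iff₀ hr]; linarith
      linarith [Real.add_one_le_exp (2 * (1 / r))]
    calc _ ≤ 3 * (1 / v) := by rw [mul_one_div]; exact h1
      _ ≤ Real.exp (2 * (1 / r)) * Real.exp (2 * α * (1 / r)) := by gcongr
      _ = Real.exp ((2 + 2 * α) * (1 / r)) := by rw [← Real.exp_add]; congr 1; ring
      _ ≤ _ := by
        rw [Real.exp_le_exp, mul_one_div, mul_one_div, div_le_div_iff₀ hr (by positivity)]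
        have : (1 + r) ^ 2 ≤ 4 := by nlinarith
        calc _ ≤ (2 + 2 * α) * (r * 4) := by gcongr
          _ ≤ _ := by nlinarith [mul_pos hr (sub_pos.2 hα)]
  · have hv1 : r ^ 2 ≤ v := by
      have := Real.rpow_le_rpow_of_exponent_le (x := r ^ 2) (by nlinarith) hα.le
      rwa [Real.rpow_one] at this
    have h1 : r ^ 3 ≤ v ^ 2 := calc
      r ^ 3 ≤ r ^ 4 := pow_le_pow_right₀ h (by norm_num)
      _ = (r ^ 2) ^ 2 := by ring
      _ ≤ v ^ 2 := by gcongr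
    have h2 : r * (1 + r) ^ 2 ≤ 4 * r ^ 3 := by
      have : (1 + r) ^ 2 ≤ 4 * r ^ 2 := by nlinarith
      nlinarith
    have h3 : 2 / (Real.exp v - 1) ≤ 16 * α * (1 / (r * (1 + r) ^ 2)) := calc
      2 / (Real.exp v - 1) ≤ 2 / (r ^ 3 / 2) := by
        gcongr
        linarith
      _ = 16 * (1 / (4 * r ^ 3)) := by field_simp; norm_num
      _ ≤ 16 * α * (1 / (r * (1 + r) ^ 2)) := by
        gcongr
        linarith
    linarith [Real.add_one_le_exp (16 * α * (1 / (r * (1 + r) ^ 2)))]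

theorem sum_one_div_sqrt_mul_one_add_sqrt_sq_le {s : ℝ} (hs : 0 < s) (J : ℕ) :
    ∑ j ∈ Finset.range J, 1 / (√((j + 1) / s) * (1 + √((j + 1) / s)) ^ 2) ≤ 2 * s := by
  have key : ∑ j ∈ Finset.range J, 1 / (√((j + 1) / s) * (1 + √((j + 1) / s)) ^ 2) ≤
      2 * s * (√(J / s) / (1 + √(J / s))) := by
    induction J with
    | zero => simp
    | succ J ih =>
      rw [Finset.sum_range_succ]
      refine (add_le_add_left ih _).trans ?_
      push_cast
      have hb : 0 ≤ √((J : ℝ) / s) := Real.sqrt_nonneg _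
      have ha : 0 < √(((J : ℝ) + 1) / s) := by positivity
      have hab : √((J : ℝ) / s) ≤ √(((J : ℝ) + 1) / s) := by gcongr; linarith
      have hsq : s * (√(((J : ℝ) + 1) / s) ^ 2 - √((J : ℝ) / s) ^ 2) = 1 := by
        rw [Real.sq_sqrt (by positivity), Real.sq_sqrt (by positivity)]
        field_simp
        ring
      set a := √(((J : ℝ) + 1) / s)
      set b := √((J : ℝ) / s)
      rw [← le_sub_iff_add_le']
      have h1 : 2 * s * (a / (1 + a)) - 2 * s * (b / (1 + b)) =
          2 * s * (a - b) / ((1 + a) * (1 + b)) := by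
        field_simp
        ring
      rw [h1, div_le_div_iff₀ (by positivity) (by positivity)]
      have h2 : 1 ≤ 2 * s * (a - b) * a := by
        nlinarith [mul_nonneg hs.le (mul_nonneg (sub_nonneg.2 hab) (sub_nonneg.2 hab))]
      calc 1 * ((1 + a) * (1 + b)) ≤ 1 * ((1 + a) * (1 + a)) := by gcongr
        _ ≤ (2 * s * (a - b) * a) * ((1 + a) * (1 + a)) := by gcongr
        _ = _ := by ring
  refine key.trans (mul_le_of_le_one_right (by positivity) ?_)
  rw [div_le_one (by positivity)]
  linarith

/-- The integer vectors of length `J` whose weighted `ℓ¹` norm, with weights `((j + 1) / s) ^ α`,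
is at most `s`. The entries are confined to the box `[-M, M]`. -/
noncomputable def weightedIntVectors (α s : ℝ) (J M : ℕ) : Finset (Fin J → ℤ) :=
  (Fintype.piFinset fun _ : Fin J => Finset.Icc (-(M : ℤ)) M).filter
    fun m => ∑ j, |(m j : ℝ)| * (((j : ℝ) + 1) / s) ^ α ≤ s

theorem card_weightedIntVectors_le {α s : ℝ} (hα : 1 < α) (hs : 0 < s) (J M : ℕ) :
    ((weightedIntVectors α s J M).card : ℝ) ≤ Real.exp ((1 + 32 * α) * s) := by
  set w : Fin J → ℝ := fun j => (((j : ℝ) + 1) / s) ^ α with hw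
  have hwpos : ∀ j, 0 < w j := fun j => by positivity
  calc ((weightedIntVectors α s J M).card : ℝ)
      = ∑ m ∈ weightedIntVectors α s J M, 1 := by simp
    _ ≤ ∑ m ∈ weightedIntVectors α s J M,
        Real.exp s * ∏ j, Real.exp (-(|(m j : ℝ)| * w j)) := by
      refine Finset.sum_le_sum fun m hm => ?_
      rw [← Real.exp_sum, ← Real.exp_add, Real.one_le_exp_iff, Finset.sum_neg_distrib]
      have := (Finset.mem_filter.1 hm).2
      linarith
    _ ≤ ∑ m ∈ Fintype.piFinset fun _ : Fin J => Finset.Icc (-(M : ℤ)) M,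
        Real.exp s * ∏ j, Real.exp (-(|(m j : ℝ)| * w j)) :=
      Finset.sum_le_sum_of_subset_of_nonneg (Finset.filter_subset _ _)
        fun _ _ _ => by positivity
    _ = Real.exp s * ∏ j, ∑ a ∈ Finset.Icc (-(M : ℤ)) M, Real.exp (-(|(a : ℝ)| * w j)) := by
      rw [← Finset.mul_sum, Finset.prod_univ_sum]
    _ ≤ Real.exp s * ∏ j : Fin J, Real.exp
        (16 * α * (1 / (√(((j : ℝ) + 1) / s) * (1 + √(((j : ℝ) + 1) / s)) ^ 2))) := by
      gcongr with j
      refine (sum_Icc_neg_exp_neg_mul_abs_le (hwpos j) M).trans ?_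
      have hpos : 0 < ((j : ℝ) + 1) / s := by positivity
      have := one_add_two_div_exp_rpow_sub_one_le hα (Real.sqrt_pos.2 hpos)
      rwa [Real.sq_sqrt hpos.le] at this
    _ ≤ _ := by
      rw [← Real.exp_sum, ← Real.exp_add, Real.exp_le_exp, ← Finset.mul_sum,
        Fin.sum_univ_eq_sum_range
          (fun j : ℕ => 1 / (√(((j : ℝ) + 1) / s) * (1 + √(((j : ℝ) + 1) / s)) ^ 2)) J]
      nlinarith [mul_le_mul_of_nonneg_left (sum_one_div_sqrt_mul_one_add_sqrt_sq_le hs J)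
        (by linarith : 0 ≤ 16 * α)]

theorem lp_norm_le_of_sup_of_sum {p : ℝ≥0∞} [Fact (1 ≤ p)] {α s : ℝ} (hs : 0 < s)
    (e : lp (fun _ : ℕ => ℝ) p) (hsup : ∀ j, |e j| ≤ s ^ (-α - 1))
    (hsum : ∀ S : Finset ℕ, ∑ j ∈ S, |e j| ≤ 2 * s ^ (-α)) :
    ‖e‖ ≤ 2 * s ^ (-α - 1 + (1 / p).toReal) := by
  have hp1 : 1 ≤ p := Fact.out
  rcases eq_or_ne p ∞ with rfl | hp
  · refine lp.norm_le_of_forall_le (by positivity) fun j => ?_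
    have h := hsup j
    have : 0 < s ^ (-α - 1) := by positivity
    simp only [ENNReal.div_top, ENNReal.toReal_zero, add_zero, Real.norm_eq_abs]
    linarith
  · have hq : 1 ≤ p.toReal := by
      rw [← ENNReal.toReal_one]; exact (ENNReal.toReal_le_toReal (by simp) hp).2 hp1
    set q := p.toReal with hqdef
    have hq0 : 0 < q := by linarith
    refine lp.norm_le_of_forall_sum_le hq0 (by positivity) fun S => ?_
    have hδ : 0 ≤ s ^ (-α - 1) := by positivity
    calc ∑ j ∈ S, ‖e j‖ ^ q ≤ ∑ j ∈ S, (s ^ (-α - 1)) ^ (q - 1) * |e j| := by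
          refine Finset.sum_le_sum fun j _ => ?_
          have h0 : 0 ≤ |e j| := abs_nonneg _
          rcases h0.eq_or_lt with h | h
          · rw [Real.norm_eq_abs, ← h, Real.zero_rpow hq0.ne', mul_zero]
          · rw [Real.norm_eq_abs]
            calc |e j| ^ q = |e j| ^ (q - 1) * |e j| := by
                  rw [Real.rpow_sub_one h.ne']; field_simp
              _ ≤ _ := by
                gcongr
                · exact hsup j
      _ ≤ (s ^ (-α - 1)) ^ (q - 1) * (2 * s ^ (-α)) := by
        rw [← Finset.mul_sum]; gcongr; exact hsum S
      _ = 2 * s ^ ((-α - 1 + 1 / q) * q) := by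
        rw [← Real.rpow_mul hs.le, mul_left_comm, ← Real.rpow_add hs]
        congr 2
        field_simp
        ring
      _ ≤ 2 ^ q * s ^ ((-α - 1 + 1 / q) * q) := by
        gcongr
        simpa using Real.rpow_le_rpow_of_exponent_le (by norm_num : (1 : ℝ) ≤ 2) hq
      _ = _ := by
        rw [Real.mul_rpow (by norm_num) (by positivity), Real.rpow_mul hs.le]
        simp [hqdef]

theorem entropyNumber_closure_le_of_finset {X : Type*} [NormedAddCommGroup X] {n : ℕ} {A : Set X}
    {ε : ℝ} (hε : 0 < ε) {ι : Type*} (T : Finset ι) (hT : T.card ≤ 2 ^ n) (c : ι → X)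
    (hA : ∀ y ∈ A, ∃ m ∈ T, ‖y - c m‖ ≤ ε) : entropyNumber n (closure A) ≤ ε := by
  refine csInf_le ⟨0, fun _ h => h.1.le⟩ ⟨hε, ?_⟩
  classical
  refine ⟨fun i => if h : (i : ℕ) < T.card then c (T.equivFin.symm ⟨i, h⟩) else 0, ?_⟩
  refine closure_minimal (fun y hy => ?_)
    (isClosed_iUnion_of_finite fun _ => Metric.isClosed_closedBall)
  obtain ⟨m, hm, hle⟩ := hA y hy
  refine Set.mem_iUnion.2 ⟨⟨T.equivFin ⟨m, hm⟩, (T.equivFin ⟨m, hm⟩).2.trans_le hT⟩, ?_⟩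
  simpa [dist_eq_norm] using hle

theorem le_rpow_neg_of_dyadic {α : ℝ} (hα : 1 < α) {x : ℕ → ℝ}
    (hx : ∀ k j : ℕ, 1 ≤ k → 2 ^ (k - 1) ≤ j → j ≤ 2 ^ k - 1 →
      x j = (2 : ℝ) ^ (-(k : ℝ) * α)) {j : ℕ} (hj : 1 ≤ j) :
    0 ≤ x j ∧ x j ≤ (j : ℝ) ^ (-α) := by
  have h1 := Nat.pow_log_le_self 2 (by omega : j ≠ 0)
  have h2 := Nat.lt_pow_succ_log_self (by norm_num : 1 < 2) j
  have hxj := hx (Nat.log 2 j + 1) j (by omega) (by simpa using h1) (by simp at h2; omega)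
  refine ⟨hxj ▸ by positivity, ?_⟩
  rw [hxj, neg_mul, ← mul_neg, Real.rpow_mul (by norm_num), Real.rpow_natCast]
  refine Real.rpow_le_rpow_of_nonpos (by exact_mod_cast hj) ?_ (by linarith)
  exact_mod_cast h2.le

/-- A finite combination of the vectors `x j • e j` has coordinates `b j * x j` with `b` in the unit
ball of `ℓ¹`. -/
theorem exists_coeff_of_combination {p : ℝ≥0∞} [Fact (1 ≤ p)] {x : ℕ → ℝ} {m : ℕ} {c : Fin m → ℝ}
    {g : Fin m → lp (fun _ : ℕ => ℝ) p}
    (hg : ∀ i, g i ∈ {y : lp (fun _ : ℕ => ℝ) p | ∃ j : ℕ, 1 ≤ j ∧ y = lp.single p j (x j)})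
    (hc : ∑ i, |c i| ≤ 1) :
    ∃ b : ℕ → ℝ, b 0 = 0 ∧ (∀ S : Finset ℕ, ∑ j ∈ S, |b j| ≤ 1) ∧
      ∀ j, (∑ i, c i • g i : lp (fun _ : ℕ => ℝ) p) j = b j * x j := by
  choose J hJ hgJ using hg
  refine ⟨fun j => ∑ i, if J i = j then c i else 0, ?_, fun S => ?_, fun j => ?_⟩
  · refine Finset.sum_eq_zero fun i _ => if_neg ?_
    have := hJ i
    omega
  · calc ∑ j ∈ S, |∑ i, if J i = j then c i else 0|
        ≤ ∑ j ∈ S, ∑ i, if J i = j then |c i| else 0 := by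
          refine Finset.sum_le_sum fun j _ => (Finset.abs_sum_le_sum_abs _ _).trans_eq ?_
          refine Finset.sum_congr rfl fun i _ => ?_
          split_ifs <;> simp
      _ = ∑ i, if J i ∈ S then |c i| else 0 := by
          rw [Finset.sum_comm]
          simp
      _ ≤ ∑ i, |c i| := by
          refine Finset.sum_le_sum fun i _ => ?_
          split_ifs <;> simp
      _ ≤ 1 := hc
  · rw [lp.coeFn_sum, Finset.sum_apply, Finset.sum_mul]
    refine Finset.sum_congr rfl fun i _ => ?_
    rw [hgJ i, lp.coeFn_smul, Pi.smul_apply, smul_eq_mul]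
    by_cases h : J i = j
    · subst h
      simp
    · rw [lp.single_apply_ne _ _ _ (Ne.symm h)]
      simp [h]

/-- Rounding the coordinates `b j * x j` towards zero on the grid of step `s ^ (-α - 1)` gives an
admissible integer vector and a good approximation. -/
theorem exists_weightedIntVectors_approx {α s : ℝ} (hα : 1 < α) (hs : 0 < s) {x b : ℕ → ℝ}
    (hx : ∀ j, 1 ≤ j → 0 ≤ x j ∧ x j ≤ (j : ℝ) ^ (-α)) (hb0 : b 0 = 0)
    (hb : ∀ S : Finset ℕ, ∑ j ∈ S, |b j| ≤ 1) {J M : ℕ}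
    (hJ : ((J : ℝ) + 1) ^ (-α) ≤ s ^ (-α - 1)) (hM : s ^ (α + 1) ≤ M) :
    ∃ m : ℕ → ℤ, (fun j : Fin J => m (j + 1)) ∈ weightedIntVectors α s J M ∧
      (∀ j, (j = 0 ∨ J < j) → m j = 0) ∧ (∀ j, |b j * x j - m j * s ^ (-α - 1)| ≤ s ^ (-α - 1)) ∧
      ∀ S : Finset ℕ, ∑ j ∈ S, |b j * x j - m j * s ^ (-α - 1)| ≤ 2 * s ^ (-α) := by
  set δ := s ^ (-α - 1) with hδdef
  have hδ : 0 < δ := by positivity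
  have hδs : δ * s = s ^ (-α) := by
    rw [hδdef, Real.rpow_sub_one hs.ne']; field_simp
  have hMδ : 1 ≤ M * δ := by
    calc (1 : ℝ) = s ^ (α + 1) * δ := by rw [hδdef, ← Real.rpow_add hs]; simp
      _ ≤ M * δ := by gcongr
  have hb1 : ∀ j, |b j| ≤ 1 := fun j => by simpa using hb {j}
  have hbx : ∀ j, 1 ≤ j → |b j * x j| ≤ |b j| * (j : ℝ) ^ (-α) := fun j hj => by
    rw [abs_mul, abs_of_nonneg (hx j hj).1]
    exact mul_le_mul_of_nonneg_left (hx j hj).2 (abs_nonneg _)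
  choose r hr1 hr2 hr3 using fun j => exists_int_abs_le_abs_sub_le_one (b j * x j / δ)
  have hr1' : ∀ j, |(r j : ℝ)| * δ ≤ |b j * x j| := fun j => by
    have := hr1 j
    rwa [abs_div, abs_of_pos hδ, le_div_iff₀ hδ] at this
  have herr : ∀ j, |b j * x j - r j * δ| = |b j * x j / δ - r j| * δ := fun j => by
    rw [← abs_of_pos hδ, ← abs_mul, abs_of_pos hδ]
    congr 1
    field_simp
  have hr2' : ∀ j, |b j * x j - r j * δ| ≤ δ := fun j => by
    rw [herr]
    exact mul_le_of_le_one_left hδ.le (hr2 j)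
  have hr3' : ∀ j, |b j * x j - r j * δ| ≤ |b j * x j| := fun j => by
    rw [herr, ← le_div_iff₀ hδ]
    exact (hr3 j).trans_eq (by rw [abs_div, abs_of_pos hδ])
  set m : ℕ → ℤ := fun j => if j = 0 ∨ J < j then 0 else r j with hm
  have hm1 : ∀ j, |(m j : ℝ)| * δ ≤ |b j * x j| := fun j => by
    by_cases h : j = 0 ∨ J < j
    · simp only [hm, if_pos h]
      simpa using abs_nonneg (b j * x j)
    · simpa only [hm, if_neg h] using hr1' j
  have hm3 : ∀ j, |b j * x j - m j * δ| ≤ |b j * x j| := fun j => by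
    by_cases h : j = 0 ∨ J < j
    · simp [hm, if_pos h]
    · simpa only [hm, if_neg h] using hr3' j
  have hm2 : ∀ j, |b j * x j - m j * δ| ≤ δ := fun j => by
    rcases Nat.eq_zero_or_pos j with rfl | hj
    · simpa [hb0] using (hm3 0).trans (by simpa [hb0] using hδ.le)
    by_cases h : J < j
    · refine (hm3 j).trans ((hbx j hj).trans ?_)
      calc |b j| * (j : ℝ) ^ (-α) ≤ 1 * ((J : ℝ) + 1) ^ (-α) := by
            refine mul_le_mul (hb1 j) ?_ (by positivity) (by norm_num)
            exact Real.rpow_le_rpow_of_nonpos (by positivity) (by exact_mod_cast h) (by linarith)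
        _ ≤ δ := by simpa using hJ
    · have h' : ¬ (j = 0 ∨ J < j) := by omega
      simpa only [hm, if_neg h'] using hr2' j
  have hcoord : ∀ j : ℕ, |(m (j + 1) : ℝ)| * (((j : ℝ) + 1) / s) ^ α ≤ |b (j + 1)| * s := by
    intro j
    have h1 := (hm1 (j + 1)).trans (hbx (j + 1) (by omega))
    push_cast at h1
    have hpos : (0 : ℝ) < (j : ℝ) + 1 := by positivity
    have hw : (((j : ℝ) + 1) / s) ^ α = ((j : ℝ) + 1) ^ α * (δ * s) := by
      rw [hδs, Real.div_rpow hpos.le hs.le, Real.rpow_neg hs.le]; rfl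
    have h2 : ((j : ℝ) + 1) ^ (-α) * ((j : ℝ) + 1) ^ α = 1 := by
      rw [← Real.rpow_add hpos]; simp
    calc _ = (|(m (j + 1) : ℝ)| * δ) * (((j : ℝ) + 1) ^ α * s) := by rw [hw]; ring
      _ ≤ (|b (j + 1)| * ((j : ℝ) + 1) ^ (-α)) * (((j : ℝ) + 1) ^ α * s) := by gcongr
      _ = |b (j + 1)| * (((j : ℝ) + 1) ^ (-α) * ((j : ℝ) + 1) ^ α) * s := by ring
      _ = _ := by rw [h2, mul_one]
  refine ⟨m, ?_, fun j hj => if_pos hj, hm2, fun S => ?_⟩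
  · refine Finset.mem_filter.2 ⟨Fintype.mem_piFinset.2 fun j => ?_, ?_⟩
    · have h1 : |(m (j + 1) : ℝ)| ≤ M := by
        have h2 : |b (j + 1) * x (j + 1)| ≤ 1 := by
          refine (hbx (j + 1) (by omega)).trans (mul_le_one₀ (hb1 _) (by positivity) ?_)
          exact Real.rpow_le_one_of_one_le_of_nonpos (by norm_cast; omega) (by linarith)
        have := (hm1 (j + 1)).trans (h2.trans hMδ)
        exact le_of_mul_le_mul_right this hδ
      rw [Finset.mem_Icc, ← abs_le]
      exact_mod_cast h1
    · calc _ ≤ ∑ j : Fin J, |b (j + 1)| * s := Finset.sum_le_sum fun j _ => hcoord j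
        _ = (∑ j ∈ (Finset.univ : Finset (Fin J)).map
              (Fin.valEmbedding.trans (addRightEmbedding 1)), |b j|) * s := by
            rw [Finset.sum_map, Finset.sum_mul]; rfl
        _ ≤ s := mul_le_of_le_one_left hs.le (hb _)
  · have hpt : ∀ j, |b j * x j - m j * δ| ≤
        (if j ∈ Finset.Icc 1 ⌊s⌋₊ then δ else 0) + |b j| * s ^ (-α) := by
      intro j
      have hnn : 0 ≤ |b j| * s ^ (-α) := by positivity
      rcases Nat.eq_zero_or_pos j with rfl | hj
      · simpa [hb0] using hm3 0
      split_ifs with h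
      · linarith [hm2 j]
      · rw [zero_add]
        refine (hm3 j).trans ((hbx j hj).trans ?_)
        have hsj : s ≤ j := by
          rw [Finset.mem_Icc, not_and, not_le] at h
          exact ((Nat.floor_lt hs.le).1 (h hj)).le
        exact mul_le_mul_of_nonneg_left
          (Real.rpow_le_rpow_of_nonpos hs hsj (by linarith)) (abs_nonneg _)
    calc _ ≤ ∑ j ∈ S, ((if j ∈ Finset.Icc 1 ⌊s⌋₊ then δ else 0) + |b j| * s ^ (-α)) :=
          Finset.sum_le_sum fun j _ => hpt j
      _ = (S ∩ Finset.Icc 1 ⌊s⌋₊).card * δ + (∑ j ∈ S, |b j|) * s ^ (-α) := by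
          rw [Finset.sum_add_distrib, Finset.sum_ite_mem, Finset.sum_const, nsmul_eq_mul,
            Finset.sum_mul]
      _ ≤ s * δ + 1 * s ^ (-α) := by
          gcongr
          · calc ((S ∩ Finset.Icc 1 ⌊s⌋₊).card : ℝ) ≤ (Finset.Icc 1 ⌊s⌋₊).card := by
                  exact_mod_cast Finset.card_le_card Finset.inter_subset_right
              _ = ⌊s⌋₊ := by simp
              _ ≤ s := Nat.floor_le hs.le
          · exact hb S
      _ = 2 * s ^ (-α) := by rw [mul_comm s, hδs]; ring

/-- entropy numbers of the symmetric convex hull of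
`{x_j e_j : j ≥ 1} ⊂ ℓ_p`, where `x_j = 2^{-kα}` for `2^{k-1} ≤ j ≤ 2^k - 1`. -/
theorem entropyNumber_symConvexHull_single_le
    (α : ℝ) (hα : 1 < α) (p : ℝ≥0∞) [Fact (1 ≤ p)] (x : ℕ → ℝ)
    (hx : ∀ k j : ℕ, 1 ≤ k → 2 ^ (k - 1) ≤ j → j ≤ 2 ^ k - 1 →
      x j = (2 : ℝ) ^ (-(k : ℝ) * α)) :
    ∃ C : ℝ, 0 < C ∧ ∀ n : ℕ, 1 ≤ n →
      entropyNumber n (symConvexHull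
          {y : lp (fun _ : ℕ => ℝ) p | ∃ j : ℕ, 1 ≤ j ∧ y = lp.single p j (x j)})
        ≤ C * (n : ℝ) ^ (-α - 1 + (1 / p).toReal) := by
  have hxb := fun j hj => le_rpow_neg_of_dyadic hα hx (j := j) hj
  set γ : ℝ := Real.log 2 / (1 + 32 * α) with hγ
  have hγpos : 0 < γ := div_pos (Real.log_pos (by norm_num)) (by linarith)
  refine ⟨2 * γ ^ (-α - 1 + (1 / p).toReal), by positivity, fun n hn => ?_⟩
  have hn0 : (0 : ℝ) < n := by exact_mod_cast hn
  set s : ℝ := γ * n with hsdef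
  have hs : 0 < s := by positivity
  obtain ⟨M, hM⟩ := exists_nat_ge (s ^ (α + 1))
  obtain ⟨J, hJ⟩ : ∃ J : ℕ, ((J : ℝ) + 1) ^ (-α) ≤ s ^ (-α - 1) := by
    have h1 : Filter.Tendsto (fun J : ℕ => ((J : ℝ) + 1) ^ (-α)) Filter.atTop (nhds 0) :=
      (tendsto_rpow_neg_atTop (by linarith)).comp
        (Filter.tendsto_atTop_add_const_right _ _ tendsto_natCast_atTop_atTop)
    exact (h1.eventually_le_const (by positivity : (0 : ℝ) < s ^ (-α - 1))).exists
  rw [mul_assoc, ← Real.mul_rpow hγpos.le hn0.le]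
  refine entropyNumber_closure_le_of_finset (by positivity) (weightedIntVectors α s J M) ?_
    (fun m => ∑ j : Fin J, lp.single p ((j : ℕ) + 1) ((m j : ℝ) * s ^ (-α - 1))) ?_
  · have h1 := card_weightedIntVectors_le hα hs J M
    have h2 : (1 + 32 * α) * s = Real.log 2 * n := by
      rw [hsdef, hγ]
      have : 1 + 32 * α ≠ 0 := by linarith
      field_simp
    rw [h2, Real.exp_mul, Real.exp_log (by norm_num), Real.rpow_natCast] at h1
    exact_mod_cast h1
  · rintro y ⟨l, c, g, hg, hc, rfl⟩
    obtain ⟨b, hb0, hb, hby⟩ := exists_coeff_of_combination hg hc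
    obtain ⟨m, hmem, hm0, hsup, hsum⟩ :=
      exists_weightedIntVectors_approx hα hs hxb hb0 hb hJ hM
    refine ⟨_, hmem, ?_⟩
    have hcenter : ∀ j, (∑ i : Fin J, lp.single p ((i : ℕ) + 1)
        ((m (i + 1) : ℝ) * s ^ (-α - 1)) : lp (fun _ : ℕ => ℝ) p) j = m j * s ^ (-α - 1) := by
      intro j
      rw [lp.coeFn_sum, Finset.sum_apply]
      by_cases hj : j = 0 ∨ J < j
      · rw [hm0 j hj, Int.cast_zero, zero_mul]
        refine Finset.sum_eq_zero fun i _ => lp.single_apply_ne _ _ _ ?_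
        have := i.2
        omega
      · rw [Finset.sum_eq_single (⟨j - 1, by omega⟩ : Fin J)]
        · have h : j - 1 + 1 = j := by omega
          simp only [h]
          exact lp.single_apply_self _ _ _
        · intro i _ hi
          refine lp.single_apply_ne _ _ _ fun h => hi (Fin.ext ?_)
          simp [h]
        · simp
    refine lp_norm_le_of_sup_of_sum hs _ (fun j => ?_) fun S => ?_
    · simpa only [lp.coeFn_sub, Pi.sub_apply, hby, hcenter] using hsup j
    · simpa only [lp.coeFn_sub, Pi.sub_apply, hby, hcenter] using hsum S
end

section
/- Let (a_n)_{n≥0} and (b_n)_{n≥1} be non-negative real sequences with a_0 > 0 satisfying a_n ≤ a_{n−1}(1 − b_n a_{n−1}) for all n ≥ 1, and set b_0 = 1/a_0. Then a_n ≤ 1/(b_0 + b_1 + ⋯ + b_n) for all n ≥ 0. -/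
open scoped RealInnerProductSpace

/-- One step of the recursion `y ≤ x (1 - β x)` turns the bound `x S ≤ 1` into
`y (S + β) ≤ 1`. -/
lemma mul_add_le_one_of_le_mul_one_sub {x y β S : ℝ} (hx : 0 ≤ x) (hy : 0 ≤ y) (hβ : 0 ≤ β)
    (hS : 0 ≤ S) (hxS : x * S ≤ 1) (h : y ≤ x * (1 - β * x)) : y * (S + β) ≤ 1 := by
  rcases hx.eq_or_lt with rfl | hx
  · have hy0 : y = 0 := le_antisymm (by simpa using h) hy
    simp [hy0]
  · have hfac : 0 ≤ 1 - β * x := nonneg_of_mul_nonneg_right (hy.trans h) hx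
    have hyx : y ≤ x := h.trans (mul_le_of_le_one_right hx.le (by nlinarith [mul_nonneg hβ hx.le]))
    have hyS : y * S ≤ 1 - β * x :=
      calc y * S ≤ x * (1 - β * x) * S := by gcongr
        _ = x * S * (1 - β * x) := by ring
        _ ≤ 1 - β * x := mul_le_of_le_one_left hfac hxS
    have hyβ : y * β ≤ β * x := by
      rw [mul_comm β]
      gcongr
    linarith

/-- elementary recursion bound for non-negative sequences
(Lemma 4.1 of the paper). -/
theorem recursive_sequence_bound (a b : ℕ → ℝ)
    (ha : ∀ n, 0 ≤ a n) (hb : ∀ n, 1 ≤ n → 0 ≤ b n)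
    (ha0 : 0 < a 0) (hb0 : b 0 = 1 / a 0)
    (hrec : ∀ n, 1 ≤ n → a n ≤ a (n - 1) * (1 - b n * a (n - 1))) :
    ∀ n : ℕ, a n ≤ 1 / (∑ i ∈ Finset.range (n + 1), b i) := by
  have hpos : ∀ n : ℕ, 0 < ∑ i ∈ Finset.range (n + 1), b i := by
    intro n
    rw [Finset.sum_range_succ']
    have hb0pos : 0 < b 0 := by rw [hb0]; positivity
    exact add_pos_of_nonneg_of_pos
      (Finset.sum_nonneg fun i _ => hb (i + 1) (Nat.le_add_left 1 i)) hb0pos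
  intro n
  rw [le_div_iff₀ (hpos n)]
  induction n with
  | zero => simp [hb0, ha0.ne']
  | succ n ih =>
    rw [Finset.sum_range_succ]
    exact mul_add_le_one_of_le_mul_one_sub (ha n) (ha (n + 1)) (hb _ (Nat.le_add_left 1 n))
      (hpos n).le ih (hrec (n + 1) (Nat.le_add_left 1 n))
end
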